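/- arXiv:math/0209348 — 3 statements merged into one kernel-verified Lean document; each statement's English description precedes it below -/
import Mathlib

section
/- Let G be a triangle-free graph in which any two chordless cycles share at most one edge and which contains at least one cycle. Then there exists an edge of G that lies on at most one chordless cycle. -/
open SimpleGraph
variable {V : Type*}

/-- A cycle is chordless if every edge of `G` joining two vertices of the cycle is an
edge of the cycle (equivalently, no edge of `G` joins two non-consecutive vertices). -/
def IsChordlessCycle {G : SimpleGraph V} {v : V} (c : G.Walk v v) : Prop :=
  c.IsCycle ∧ ∀ x y, x ∈ c.support → y ∈ c.support → G.Adj x y → s(x, y) ∈ c.edges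

/-- The edge sets of chordless cycles of `G`. -/
def chordlessCycleSets (G : SimpleGraph V) : Set (Set (Sym2 V)) :=
  {S | ∃ (v : V) (c : G.Walk v v), IsChordlessCycle c ∧ S = {e | e ∈ c.edges}}

/-- `G` is triangle-free: it has no cycle of length 3. -/
def TriangleFree (G : SimpleGraph V) : Prop :=
  ∀ (v : V) (c : G.Walk v v), c.IsCycle → c.length ≠ 3

/-- Any two (distinct) chordless cycles of `G` share at most one edge. -/
def ChordlessCyclesShareAtMostOneEdge (G : SimpleGraph V) : Prop :=
  ∀ S ∈ chordlessCycleSets G, ∀ T ∈ chordlessCycleSets G, S ≠ T → (S ∩ T).ncard ≤ 1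

/-!
Fix a finite set `W` of vertices spanning a connected subgraph and, among all pairs of a vertex
`v ∈ W` and a nonempty connected `X ⊆ W` containing neither `v` nor a neighbour of `v`, choose one
with `X` maximal. By maximality `v` is adjacent to every vertex of `W \ X` that has a neighbour in
`X`. Every neighbour `w` of `v` in `W` has a neighbour in `X`: otherwise `w` could play the role of
`v`, and `v`, `w` would form a triangle with a vertex of `W \ X` that has a neighbour in `X`.
If `v` had three neighbours `a`, `b`, `c` in `W`, there would be two chordless cycles through
`v` and `a` leaving `a` along the same edge, one passing through `b` and the other through `c`;
sharing two edges, they would have to coincide, which they do not. So `v` has at most two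
neighbours in `W`. Taking for `W` a component of the graph spanned by the vertices on chordless
cycles, two chordless cycles through an edge at `v` have both their edges at `v` in common, and
therefore coincide.
-/

section Walks

variable {V' : Type*} {G : SimpleGraph V} {G' : SimpleGraph V'} {a b v x : V}

theorem isChordless_of_length_eq_dist {p : G.Walk a b} (hp : p.length = G.dist a b) :
    p.IsChordless := by
  have consecutive : ∀ i j, i < j → j ≤ p.length → G.Adj (p.getVert i) (p.getVert j) →
      s(p.getVert i, p.getVert j) ∈ p.edges := by
    intro i j hij hj hadj
    have shortcut := dist_le ((p.take i).append (.cons hadj (p.drop j)))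
    rw [Walk.length_append, Walk.length_cons, Walk.take_length, Walk.drop_length] at shortcut
    obtain rfl : j = i + 1 := by omega
    rw [← Walk.adj_toSubgraph_iff_mem_edges]
    exact p.toSubgraph_adj_getVert (by omega)
  rw [Walk.isChordless_iff_forall_mem_edges]
  intro x y hx hy hxy
  obtain ⟨i, rfl, hi⟩ := Walk.mem_support_iff_exists_getVert.1 hx
  obtain ⟨j, rfl, hj⟩ := Walk.mem_support_iff_exists_getVert.1 hy
  rcases lt_trichotomy i j with hij | rfl | hji
  · exact consecutive i j hij hj hxy
  · exact absurd hxy G.irrefl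
  · rw [Sym2.eq_swap]
    exact consecutive j i hji hi hxy.symm

theorem isChordless_map_embedding {p : G.Walk a b} (hp : p.IsChordless) (f : G ↪g G') :
    (p.map f.toHom).IsChordless := by
  rw [Walk.isChordless_iff_forall_mem_edges]
  simp only [Walk.support_map, List.mem_map, Walk.edges_map]
  rintro _ _ ⟨x, hx, rfl⟩ ⟨y, hy, rfl⟩ hxy
  exact ⟨s(x, y), hp.mem_edges hx hy (f.map_adj_iff.1 hxy), rfl⟩

theorem exists_isPath_isChordless_of_preconnected_induce {X : Set V}
    (hX : (G.induce X).Preconnected) (ha : a ∈ X) (hb : b ∈ X) :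
    ∃ p : G.Walk a b, p.IsPath ∧ p.IsChordless ∧ ∀ x ∈ p.support, x ∈ X := by
  obtain ⟨p, hp, hdist⟩ := (hX ⟨a, ha⟩ ⟨b, hb⟩).exists_path_of_dist
  refine ⟨p.map (Embedding.induce X).toHom, hp.map Subtype.val_injective,
    isChordless_map_embedding (isChordless_of_length_eq_dist hdist) _, fun x hx => ?_⟩
  obtain ⟨y, -, rfl⟩ := List.mem_map.1 (Walk.support_map .. ▸ hx)
  exact y.2

theorem eq_snd_of_adj_of_isChordless {p : G.Walk a b} (hp : p.IsPath) (hch : p.IsChordless)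
    (hx : x ∈ p.support) (hax : G.Adj a x) : x = p.snd :=
  hp.eq_snd_of_mem_edges (hch.mem_edges p.start_mem_support hx hax)

theorem preconnected_induce_support_diff_end {p : G.Walk a b} (hp : p.IsPath) :
    (G.induce ({x | x ∈ p.support} \ {b})).Preconnected := by
  by_cases hnil : p.Nil
  · have hsub : ({x | x ∈ p.support} \ {b}).Subsingleton := by
      rw [Walk.nil_iff_support_eq.1 hnil, hnil.eq]
      simp
    have := hsub.coe_sort
    exact .of_subsingleton
  · have hdrop : {x | x ∈ p.support} \ {b} = {x | x ∈ p.dropLast.support} := by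
      have hsupp := Walk.support_dropLast_concat hnil
      have hb : b ∉ p.dropLast.support := by
        have hnodup := hp.support_nodup
        rw [← hsupp, List.nodup_append] at hnodup
        exact fun hb => hnodup.2.2 b hb b (List.mem_singleton_self b) rfl
      ext x
      rw [← hsupp]
      grind
    rw [hdrop]
    exact p.dropLast.connected_induce_support.preconnected

theorem exists_ne_mem_edges_of_isCycle {c : G.Walk v v} (hc : c.IsCycle) (ha : a ∈ c.support)
    (u : V) : ∃ b ≠ u, s(a, b) ∈ c.edges := by
  have htwo : 1 < (c.toSubgraph.neighborSet a).ncard := by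
    rw [hc.ncard_neighborSet_toSubgraph_eq_two ha]
    exact one_lt_two
  obtain ⟨b, hb, hbu⟩ := Set.exists_ne_of_one_lt_ncard htwo u
  exact ⟨b, hbu, Walk.adj_toSubgraph_iff_mem_edges.1 hb⟩

theorem isCycle_cons_concat {p : G.Walk a b} (hp : p.IsPath) (hab : a ≠ b) (hv : v ∉ p.support)
    (hva : G.Adj v a) (hbv : G.Adj b v) : (Walk.cons hva (p.concat hbv)).IsCycle := by
  rw [Walk.cons_isCycle_iff]
  refine ⟨hp.concat hv hbv, ?_⟩
  rw [Walk.edges_concat, List.concat_eq_append, List.mem_append, List.mem_singleton]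
  rintro (hedge | hedge)
  · exact hv (p.fst_mem_support_of_mem_edges hedge)
  · grind [Sym2.eq_iff]

theorem isChordlessCycle_cons_concat {p : G.Walk a b} (hp : p.IsPath) (hch : p.IsChordless)
    (hab : a ≠ b) (hv : v ∉ p.support) (hva : G.Adj v a) (hbv : G.Adj b v)
    (hadj : ∀ x ∈ p.support, G.Adj v x → x = a ∨ x = b) :
    IsChordlessCycle (Walk.cons hva (p.concat hbv)) := by
  have mem_apex : ∀ x ∈ p.support, G.Adj v x → s(v, x) ∈ (Walk.cons hva (p.concat hbv)).edges := by
    intro x hx hvx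
    rcases hadj x hx hvx with rfl | rfl <;> simp [Walk.edges_concat, Sym2.eq_swap]
  refine ⟨isCycle_cons_concat hp hab hv hva hbv, fun x y hx hy hxy => ?_⟩
  have mem_support : ∀ z ∈ (Walk.cons hva (p.concat hbv)).support, z = v ∨ z ∈ p.support := by
    intro z hz
    simpa [Walk.support_concat, or_comm, or_assoc] using hz
  rcases mem_support x hx with rfl | hxp <;> rcases mem_support y hy with rfl | hyp
  · exact absurd hxy G.irrefl
  · exact mem_apex y hyp hxy
  · rw [Sym2.eq_swap]
    exact mem_apex x hxp hxy.symm
  · simp [Walk.edges_concat, hch.mem_edges hxp hyp hxy]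

end Walks

section Connectivity

variable {G : SimpleGraph V} {W X : Set V} {v x : V}

theorem preconnected_induce_insert (hX : (G.induce X).Preconnected)
    (hx : (G.neighborSet x ∩ X).Nonempty) : (G.induce (insert x X)).Preconnected := by
  obtain ⟨y, hxy, hy⟩ := hx
  exact (connected_induce_union .of_subsingleton hX (Set.mem_singleton x) hy hxy).preconnected

theorem exists_mem_diff_neighborSet_inter_nonempty (hW : (G.induce W).Preconnected) (hXW : X ⊆ W)
    (hX : X.Nonempty) (hv : v ∈ W \ X) : ∃ x ∈ W \ X, (G.neighborSet x ∩ X).Nonempty := by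
  obtain ⟨y, hy⟩ := hX
  obtain ⟨w⟩ := hW ⟨y, hXW hy⟩ ⟨v, hv.1⟩
  obtain ⟨d, -, hfst, hsnd⟩ := w.exists_boundary_dart (Subtype.val ⁻¹' X) hy hv.2
  exact ⟨d.snd, ⟨d.snd.2, hsnd⟩, d.fst, d.adj.symm, hfst⟩

theorem exists_preconnected_induce_forall_neighborSet_inter_subset (hW : W.Finite)
    (hne : W.Nonempty) : ∃ X ⊆ W, X.Nonempty ∧ (G.induce X).Preconnected ∧
      ∀ x ∈ X, G.neighborSet x ∩ W ⊆ X := by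
  obtain ⟨w, hw⟩ := hne
  have hfin : {X | X ⊆ W ∧ X.Nonempty ∧ (G.induce X).Preconnected}.Finite :=
    hW.finite_subsets.subset fun X hX => hX.1
  obtain ⟨X, hX⟩ := hfin.exists_maximal
    ⟨{w}, Set.singleton_subset_iff.2 hw, Set.singleton_nonempty w, .of_subsingleton⟩
  obtain ⟨hXW, hXne, hXconn⟩ := hX.prop
  refine ⟨X, hXW, hXne, hXconn, fun x hx y hy => ?_⟩
  exact hX.le_of_ge ⟨Set.insert_subset hy.2 hXW, Set.insert_nonempty y X,
    preconnected_induce_insert hXconn ⟨x, hy.1.symm, hx⟩⟩ (Set.subset_insert y X)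
    (Set.mem_insert y X)

end Connectivity

theorem TriangleFree.not_adj {G : SimpleGraph V} {u v w : V} (htf : TriangleFree G)
    (huv : G.Adj u v) (huw : G.Adj u w) : ¬ G.Adj v w := by
  classical
  intro hvw
  obtain ⟨x, c, hc, hlen⟩ := is3Clique_iff_exists_cycle_length_three.1
    ⟨{u, v, w}, is3Clique_triple_iff.2 ⟨huv, huw, hvw⟩⟩
  exact htf x c hc hlen

section ChordlessCycleSets

variable {G : SimpleGraph V} {S T : Set (Sym2 V)} {e f : Sym2 V} {a v : V}

theorem finite_of_mem_chordlessCycleSets (hS : S ∈ chordlessCycleSets G) : S.Finite := by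
  obtain ⟨v, c, -, rfl⟩ := hS
  exact c.edges.finite_toSet

theorem exists_ne_mem_of_mem_chordlessCycleSets (hS : S ∈ chordlessCycleSets G)
    (ha : s(v, a) ∈ S) : ∃ b ≠ a, s(v, b) ∈ S := by
  obtain ⟨u, c, hc, rfl⟩ := hS
  exact exists_ne_mem_edges_of_isCycle hc.1 (c.fst_mem_support_of_mem_edges ha) a

theorem adj_of_mem_chordlessCycleSets (hS : S ∈ chordlessCycleSets G) (ha : s(v, a) ∈ S) :
    G.Adj v a := by
  obtain ⟨u, c, -, rfl⟩ := hS
  exact c.adj_of_mem_edges ha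

theorem ChordlessCyclesShareAtMostOneEdge.eq_of_mem (hci : ChordlessCyclesShareAtMostOneEdge G)
    (hS : S ∈ chordlessCycleSets G) (hT : T ∈ chordlessCycleSets G) (hef : e ≠ f)
    (heS : e ∈ S) (heT : e ∈ T) (hfS : f ∈ S) (hfT : f ∈ T) : S = T := by
  by_contra hne
  have hone := hci S hS T hT hne
  rw [Set.ncard_le_one ((finite_of_mem_chordlessCycleSets hS).inter_of_left T)] at hone
  exact hef (hone e ⟨heS, heT⟩ f ⟨hfS, hfT⟩)

end ChordlessCycleSets

/-- The set `X` spans a connected subgraph avoiding `v`, and `N` is the set of neighbours of `v`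
in `X`. A chordless path through `X` between two such neighbours, if there are no others, closes up
to a chordless cycle through `v`. -/
structure IsAttached (G : SimpleGraph V) (v : V) (N X : Set V) : Prop where
  preconnected : (G.induce X).Preconnected
  notMem : v ∉ X
  neighborSet_inter : G.neighborSet v ∩ X = N

namespace IsAttached

variable {G : SimpleGraph V} {M N X Y : Set V} {a b c v x y : V}

theorem subset (h : IsAttached G v N X) : N ⊆ X :=
  h.neighborSet_inter ▸ Set.inter_subset_right

theorem adj (h : IsAttached G v N X) (ha : a ∈ N) : G.Adj v a :=
  (h.neighborSet_inter.ge ha).1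

theorem mem_of_adj (h : IsAttached G v N X) (hx : x ∈ X) (hvx : G.Adj v x) : x ∈ N :=
  h.neighborSet_inter.le ⟨hvx, hx⟩

theorem of_subset (h : IsAttached G v N X) (hY : (G.induce Y).Preconnected) (hYX : Y ⊆ X) :
    IsAttached G v (N ∩ Y) Y where
  preconnected := hY
  notMem := fun hv => h.notMem (hYX hv)
  neighborSet_inter := by
    rw [← h.neighborSet_inter, Set.inter_assoc, Set.inter_eq_self_of_subset_right hYX]

theorem union (hX : IsAttached G v N X) (hY : IsAttached G v M Y) (hXY : (X ∩ Y).Nonempty) :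
    IsAttached G v (N ∪ M) (X ∪ Y) where
  preconnected := (induce_union_connected hX.preconnected hY.preconnected hXY).preconnected
  notMem := by
    rintro (hv | hv)
    · exact hX.notMem hv
    · exact hY.notMem hv
  neighborSet_inter := by
    rw [Set.inter_union_distrib_left, hX.neighborSet_inter, hY.neighborSet_inter]

theorem singleton (hvx : v ≠ x) (hadj : ¬ G.Adj v x) : IsAttached G v ∅ {x} where
  preconnected := .of_subsingleton
  notMem := hvx
  neighborSet_inter := by simpa using hadj

theorem insert_of_adj (h : IsAttached G v N X) (hvx : G.Adj v x)
    (hx : (G.neighborSet x ∩ X).Nonempty) : IsAttached G v (insert x N) (insert x X) where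
  preconnected := preconnected_induce_insert h.preconnected hx
  notMem := by
    rintro (rfl | hv)
    · exact G.irrefl hvx
    · exact h.notMem hv
  neighborSet_inter := by
    rw [Set.inter_insert_of_mem ((G.mem_neighborSet v x).2 hvx), h.neighborSet_inter]

theorem insert_of_not_adj (h : IsAttached G v N X) (hvx : v ≠ x) (hadj : ¬ G.Adj v x)
    (hx : (G.neighborSet x ∩ X).Nonempty) : IsAttached G v N (insert x X) where
  preconnected := preconnected_induce_insert h.preconnected hx
  notMem := by
    rintro (rfl | hv)
    · exact hvx rfl
    · exact h.notMem hv
  neighborSet_inter := by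
    rw [Set.inter_insert_of_notMem (mt (G.mem_neighborSet v x).1 hadj), h.neighborSet_inter]

theorem support_diff_end {p : G.Walk a b} (h : IsAttached G v N {x | x ∈ p.support})
    (hp : p.IsPath) : IsAttached G v (N \ {b}) ({x | x ∈ p.support} \ {b}) := by
  have hdiff := h.of_subset (preconnected_induce_support_diff_end hp) Set.sdiff_subset
  rwa [← Set.inter_sdiff_assoc, Set.inter_eq_self_of_subset_left h.subset] at hdiff

theorem support_diff_start {p : G.Walk a b} (h : IsAttached G v N {x | x ∈ p.support})
    (hp : p.IsPath) : IsAttached G v (N \ {a}) ({x | x ∈ p.support} \ {a}) := by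
  simpa using support_diff_end (p := p.reverse) (by simpa using h) hp.reverse

theorem exists_isPath_isChordless (h : IsAttached G v N X) (hx : x ∈ X) (hy : y ∈ X) :
    ∃ p : G.Walk x y, p.IsPath ∧ p.IsChordless ∧ (∀ z ∈ p.support, z ∈ X) ∧
      IsAttached G v (N ∩ {z | z ∈ p.support}) {z | z ∈ p.support} := by
  obtain ⟨p, hp, hch, hpX⟩ :=
    exists_isPath_isChordless_of_preconnected_induce h.preconnected hx hy
  exact ⟨p, hp, hch, hpX, h.of_subset p.connected_induce_support.preconnected hpX⟩

theorem exists_isChordlessCycle (h : IsAttached G v {a, b} X) (hab : a ≠ b) :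
    ∃ c : G.Walk v v, IsChordlessCycle c ∧ a ∈ c.support ∧ b ∈ c.support ∧
      ∀ x ∈ c.support, x = v ∨ x ∈ X := by
  obtain ⟨p, hp, hch, hpX⟩ := exists_isPath_isChordless_of_preconnected_induce h.preconnected
    (h.subset (Set.mem_insert a {b})) (h.subset (Set.mem_insert_of_mem a rfl))
  have hva : G.Adj v a := h.adj (by simp)
  have hvb : G.Adj v b := h.adj (by simp)
  refine ⟨.cons hva (p.concat hvb.symm), isChordlessCycle_cons_concat hp hch hab
    (fun hv => h.notMem (hpX v hv)) hva hvb.symm fun x hx => h.mem_of_adj (hpX x hx), ?_⟩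
  simp only [Walk.support_cons, Walk.support_concat, List.mem_cons, List.mem_append,
    List.not_mem_nil, or_false]
  refine ⟨.inr (.inl p.start_mem_support), .inr (.inl p.end_mem_support), ?_⟩
  rintro x (rfl | hx | rfl)
  exacts [.inl rfl, .inr (hpX x hx), .inl rfl]

theorem exists_mem_chordlessCycleSets (h : IsAttached G v {a, b} X) (hab : a ≠ b)
    (hx : ∀ y ∈ X, G.Adj a y → y = x) :
    x ∈ X ∧ ∃ S ∈ chordlessCycleSets G, s(v, a) ∈ S ∧ s(v, b) ∈ S ∧ s(a, x) ∈ S ∧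
      ∀ e ∈ S, ∀ y ∈ e, y = v ∨ y ∈ X := by
  obtain ⟨c, hc, hac, hbc, hcX⟩ := h.exists_isChordlessCycle hab
  obtain ⟨y, hyv, hay⟩ := exists_ne_mem_edges_of_isCycle hc.1 hac v
  have hyX : y ∈ X := (hcX y (c.snd_mem_support_of_mem_edges hay)).resolve_left hyv
  obtain rfl : y = x := hx y hyX (c.adj_of_mem_edges hay)
  refine ⟨hyX, _, ⟨v, c, hc, rfl⟩, hc.2 v a c.start_mem_support hac (h.adj (by simp)),
    hc.2 v b c.start_mem_support hbc (h.adj (by simp)), hay, fun e he z hz => hcX z ?_⟩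
  exact c.mem_support_of_mem_edges he hz

theorem mem_of_forall_adj_eq (hci : ChordlessCyclesShareAtMostOneEdge G)
    (hX : IsAttached G v {a, b} X) (hY : IsAttached G v {a, c} Y) (hab : a ≠ b) (hac : a ≠ c)
    (hxX : ∀ y ∈ X, G.Adj a y → y = x) (hxY : ∀ y ∈ Y, G.Adj a y → y = x) : b ∈ Y := by
  obtain ⟨hx, S, hS, hvaS, hvbS, haxS, -⟩ := hX.exists_mem_chordlessCycleSets hab hxX
  obtain ⟨-, T, hT, hvaT, -, haxT, hTY⟩ := hY.exists_mem_chordlessCycleSets hac hxY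
  have hne : s(v, a) ≠ s(a, x) := by
    rw [Sym2.eq_swap, Ne, Sym2.congr_right]
    rintro rfl
    exact hX.notMem hx
  obtain rfl : S = T := hci.eq_of_mem hS hT hne hvaS hvaT haxS haxT
  exact (hTY _ hvbS b (Sym2.mem_mk_right v b)).resolve_left
    (adj_of_mem_chordlessCycleSets hS hvbS).ne'

theorem not_adj_of_mem_support (htf : TriangleFree G) (hci : ChordlessCyclesShareAtMostOneEdge G)
    {p : G.Walk b c} (hp : p.IsPath) (hch : p.IsChordless)
    (h : IsAttached G v {b, c} {x | x ∈ p.support}) (hva : G.Adj v a) (hab : a ≠ b) (hac : a ≠ c)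
    (hbc : b ≠ c) (hx : x ∈ p.support) : ¬ G.Adj a x := by
  intro hax
  have hvb : G.Adj v b := h.adj (by simp)
  have hxc : x ≠ c := by
    rintro rfl
    exact htf.not_adj hva (h.adj (by simp)) hax
  have hY : IsAttached G v {b, a} (insert a ({x | x ∈ p.support} \ {c})) := by
    have := (h.support_diff_end hp).insert_of_adj hva ⟨x, hax, hx, hxc⟩
    rwa [Set.insert_sdiff_of_notMem _ (by simpa using hbc), Set.sdiff_self, insert_empty_eq,
      Set.pair_comm] at this
  have hcY := mem_of_forall_adj_eq hci h hY hbc hab.symm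
    (fun y hy => eq_snd_of_adj_of_isChordless hp hch hy) (by
      rintro y (rfl | hy) hby
      · exact absurd hby (htf.not_adj hvb hva)
      · exact eq_snd_of_adj_of_isChordless hp hch hy.1 hby)
  rcases hcY with rfl | hcY
  · exact hac rfl
  · exact hcY.2 rfl

theorem start_mem_support_of_isChordless (htf : TriangleFree G)
    (hci : ChordlessCyclesShareAtMostOneEdge G) {p : G.Walk b c} (hp : p.IsPath)
    (hch : p.IsChordless) (h : IsAttached G v {b, c} {x | x ∈ p.support}) {w : G.Walk a x}
    (hw : w.IsPath) (hwch : w.IsChordless) (hwatt : IsAttached G v {a} {x | x ∈ w.support})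
    (hx : x ∈ p.support) (hab : a ≠ b) (hac : a ≠ c) (hbc : b ≠ c) (hxb : x ≠ b) (hxc : x ≠ c) :
    b ∈ w.support := by
  have haw : ∀ y ∈ w.support, G.Adj a y → y = w.snd := fun y =>
    eq_snd_of_adj_of_isChordless hw hwch
  have hap : ∀ y ∈ p.support, ¬ G.Adj a y := fun y =>
    h.not_adj_of_mem_support htf hci hp hch (hwatt.adj rfl) hab hac hbc
  have hX : IsAttached G v {a, b} ({y | y ∈ w.support} ∪ {y | y ∈ p.support} \ {c}) := by
    have := hwatt.union (h.support_diff_end hp) ⟨x, w.end_mem_support, hx, hxc⟩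
    rwa [Set.insert_sdiff_of_notMem _ (by simpa using hbc), Set.sdiff_self, insert_empty_eq,
      Set.singleton_union] at this
  have hY : IsAttached G v {a, c} ({y | y ∈ w.support} ∪ {y | y ∈ p.support} \ {b}) := by
    have := hwatt.union (h.support_diff_start hp) ⟨x, w.end_mem_support, hx, hxb⟩
    rwa [Set.pair_comm b c, Set.insert_sdiff_of_notMem _ (by simpa using hbc.symm), Set.sdiff_self,
      insert_empty_eq, Set.singleton_union] at this
  have hbY := mem_of_forall_adj_eq hci hX hY hab hac
    (fun y hy hay => hy.elim (haw y · hay) fun hyp => absurd hay (hap y hyp.1))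
    (fun y hy hay => hy.elim (haw y · hay) fun hyp => absurd hay (hap y hyp.1))
  exact hbY.resolve_right fun hb => hb.2 rfl

theorem eq_or_eq_or_eq (htf : TriangleFree G) (hci : ChordlessCyclesShareAtMostOneEdge G)
    (h : IsAttached G v ∅ X) (hva : G.Adj v a) (hvb : G.Adj v b) (hvc : G.Adj v c)
    (ha : (G.neighborSet a ∩ X).Nonempty) (hb : (G.neighborSet b ∩ X).Nonempty)
    (hc : (G.neighborSet c ∩ X).Nonempty) : a = b ∨ a = c ∨ b = c := by
  by_contra! ⟨hab, hac, hbc⟩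
  have hbcX : IsAttached G v {b, c} (insert b (insert c X)) := by
    simpa using (h.insert_of_adj hvc hc).insert_of_adj hvb
      (hb.mono (Set.inter_subset_inter_right _ (Set.subset_insert c X)))
  obtain ⟨p, hp, hch, hpX, hpatt⟩ := hbcX.exists_isPath_isChordless (x := b) (y := c)
    (by simp) (by simp)
  rw [Set.inter_eq_left.2 (by simp [Set.insert_subset_iff])] at hpatt
  have hbsnd : G.Adj b p.snd := p.adj_snd fun hnil => hbc hnil.eq
  have hsndc : p.snd ≠ c := fun heq => htf.not_adj hvb hvc (heq ▸ hbsnd)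
  have hsndX : p.snd ∈ X :=
    ((hpX _ (p.getVert_mem_support 1)).resolve_left hbsnd.ne').resolve_left hsndc
  obtain ⟨w, hw, hwch, hwX, hwatt⟩ := (h.insert_of_adj hva ha).exists_isPath_isChordless
    (Set.mem_insert a X) (Set.mem_insert_of_mem a hsndX)
  rw [insert_empty_eq, Set.inter_eq_left.2 (by simp)] at hwatt
  have hbw : b ∈ w.support := hpatt.start_mem_support_of_isChordless htf hci hp hch hw hwch hwatt
    (p.getVert_mem_support 1) hab hac hbc hbsnd.ne' hsndc
  rcases hwX b hbw with rfl | hbX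
  · exact hab rfl
  · exact h.mem_of_adj hbX hvb

end IsAttached

/-- The set `X` is a nonempty connected subset of `W` containing neither `v` nor a neighbour of `v`,
for some vertex `v` of `W`. Such sets are compared by inclusion; `v` is not fixed. -/
def IsRemoteIn (G : SimpleGraph V) (W X : Set V) : Prop :=
  X ⊆ W ∧ X.Nonempty ∧ ∃ v ∈ W, IsAttached G v ∅ X

section SmallDegree

variable {G : SimpleGraph V} {W X : Set V} {v w x : V}

theorem exists_maximal_isRemoteIn (htf : TriangleFree G) (hW : W.Finite)
    (hdeg : 1 < (G.neighborSet v ∩ W).ncard) : ∃ X, Maximal (IsRemoteIn G W) X := by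
  obtain ⟨a, b, ha, hb, hab⟩ := (Set.one_lt_ncard_iff (hW.inter_of_right _)).1 hdeg
  have hfin : {X | IsRemoteIn G W X}.Finite := hW.finite_subsets.subset fun X hX => hX.1
  exact hfin.exists_maximal ⟨{b}, Set.singleton_subset_iff.2 hb.2, Set.singleton_nonempty b, a,
    ha.2, .singleton hab (htf.not_adj ha.1 hb.1)⟩

theorem adj_of_maximal_isRemoteIn (hX : Maximal (IsRemoteIn G W) X) (hv : v ∈ W)
    (hvX : IsAttached G v ∅ X) (hx : x ∈ W \ X) (htouch : (G.neighborSet x ∩ X).Nonempty) :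
    G.Adj v x := by
  by_contra hadj
  have hvx : v ≠ x := by
    rintro rfl
    exact htouch.ne_empty hvX.neighborSet_inter
  exact hx.2 <| hX.le_of_ge ⟨Set.insert_subset hx.1 hX.prop.1, Set.insert_nonempty x X, v, hv,
    hvX.insert_of_not_adj hvx hadj htouch⟩ (Set.subset_insert x X) (Set.mem_insert x X)

theorem neighborSet_inter_nonempty_of_maximal_isRemoteIn (htf : TriangleFree G)
    (hconn : (G.induce W).Preconnected) (hX : Maximal (IsRemoteIn G W) X) (hv : v ∈ W)
    (hvX : IsAttached G v ∅ X) (hw : w ∈ W) (hvw : G.Adj v w) :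
    (G.neighborSet w ∩ X).Nonempty := by
  by_contra hempty
  have hwX : IsAttached G w ∅ X :=
    ⟨hvX.preconnected, fun hwX => hvX.mem_of_adj hwX hvw, Set.not_nonempty_iff_eq_empty.1 hempty⟩
  obtain ⟨x, hx, htouch⟩ := exists_mem_diff_neighborSet_inter_nonempty hconn hX.prop.1
    hX.prop.2.1 ⟨hv, hvX.notMem⟩
  exact htf.not_adj hvw (adj_of_maximal_isRemoteIn hX hv hvX hx htouch)
    (adj_of_maximal_isRemoteIn hX hw hwX hx htouch)

theorem exists_ncard_neighborSet_inter_le_two_of_preconnected (htf : TriangleFree G)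
    (hci : ChordlessCyclesShareAtMostOneEdge G) (hW : W.Finite) (hne : W.Nonempty)
    (hconn : (G.induce W).Preconnected) : ∃ v ∈ W, (G.neighborSet v ∩ W).ncard ≤ 2 := by
  by_contra! hdeg
  obtain ⟨u, hu⟩ := hne
  obtain ⟨X, hX⟩ := exists_maximal_isRemoteIn htf hW (one_lt_two.trans (hdeg u hu))
  obtain ⟨-, -, v, hv, hvX⟩ := hX.prop
  have htouch : ∀ w ∈ G.neighborSet v ∩ W, (G.neighborSet w ∩ X).Nonempty := fun w hw =>
    neighborSet_inter_nonempty_of_maximal_isRemoteIn htf hconn hX hv hvX hw.2 hw.1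
  obtain ⟨a, b, c, ha, hb, hc, hab, hac, hbc⟩ :=
    (Set.two_lt_ncard_iff (hW.inter_of_right _)).1 (hdeg v hv)
  rcases hvX.eq_or_eq_or_eq htf hci ha.1 hb.1 hc.1 (htouch a ha) (htouch b hb) (htouch c hc) with
    heq | heq | heq
  exacts [hab heq, hac heq, hbc heq]

theorem exists_ncard_neighborSet_inter_le_two (htf : TriangleFree G)
    (hci : ChordlessCyclesShareAtMostOneEdge G) (hW : W.Finite) (hne : W.Nonempty) :
    ∃ v ∈ W, (G.neighborSet v ∩ W).ncard ≤ 2 := by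
  obtain ⟨X, hXW, hXne, hconn, hclosed⟩ :=
    exists_preconnected_induce_forall_neighborSet_inter_subset (G := G) hW hne
  obtain ⟨v, hv, hdeg⟩ := exists_ncard_neighborSet_inter_le_two_of_preconnected htf hci
    (hW.subset hXW) hXne hconn
  have hsub : G.neighborSet v ∩ W ⊆ G.neighborSet v ∩ X := fun w hw => ⟨hw.1, hclosed v hv hw⟩
  exact ⟨v, hXW hv, (Set.ncard_le_ncard hsub ((hW.subset hXW).inter_of_right _)).trans hdeg⟩

end SmallDegree

/-- The vertices lying on a chordless cycle of `G`. -/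
def chordlessCycleVertices (G : SimpleGraph V) : Set V :=
  {x | ∃ S ∈ chordlessCycleSets G, ∃ e ∈ S, x ∈ e}

section ChordlessCycleVertices

variable {G : SimpleGraph V}

theorem finite_chordlessCycleVertices (hfin : (chordlessCycleSets G).Finite) :
    (chordlessCycleVertices G).Finite := by
  have hunion : chordlessCycleVertices G = ⋃ S ∈ chordlessCycleSets G, ⋃ e ∈ S, {x | x ∈ e} := by
    ext x
    simp [chordlessCycleVertices]
  rw [hunion]
  refine hfin.biUnion fun S hS => (finite_of_mem_chordlessCycleSets hS).biUnion fun e _ => ?_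
  induction e with | _ a b =>
  exact (Set.toFinite {a, b}).subset fun x hx => Sym2.mem_iff.1 hx

theorem subsingleton_of_ncard_neighborSet_inter_le_two (hci : ChordlessCyclesShareAtMostOneEdge G)
    (hfin : (chordlessCycleVertices G).Finite) {v a : V}
    (hdeg : (G.neighborSet v ∩ chordlessCycleVertices G).ncard ≤ 2) :
    {S ∈ chordlessCycleSets G | s(v, a) ∈ S}.Subsingleton := by
  rintro S ⟨hS, haS⟩ T ⟨hT, haT⟩
  obtain ⟨b, hba, hbS⟩ := exists_ne_mem_of_mem_chordlessCycleSets hS haS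
  obtain ⟨c, hca, hcT⟩ := exists_ne_mem_of_mem_chordlessCycleSets hT haT
  have mem_inter : ∀ {R y}, R ∈ chordlessCycleSets G → s(v, y) ∈ R →
      y ∈ G.neighborSet v ∩ chordlessCycleVertices G := fun hR hy =>
    ⟨adj_of_mem_chordlessCycleSets hR hy, _, hR, _, hy, Sym2.mem_mk_right v _⟩
  obtain rfl : b = c := by
    by_contra hbc
    exact hdeg.not_gt ((Set.two_lt_ncard_iff (hfin.inter_of_right _)).2
      ⟨a, b, c, mem_inter hS haS, mem_inter hS hbS, mem_inter hT hcT, hba.symm, hca.symm, hbc⟩)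
  exact hci.eq_of_mem hS hT (mt Sym2.congr_right.1 hba) hbS hcT haS haT

theorem exists_edge_on_at_most_one_chordless_cycle_general (htf : TriangleFree G)
    (hci : ChordlessCyclesShareAtMostOneEdge G) (hfin : (chordlessCycleSets G).Finite)
    (hG : G ≠ ⊥) : ∃ e ∈ G.edgeSet, {S ∈ chordlessCycleSets G | e ∈ S}.Subsingleton := by
  have hWfin := finite_chordlessCycleVertices hfin
  rcases (chordlessCycleVertices G).eq_empty_or_nonempty with hempty | hne
  · obtain ⟨e, he⟩ := edgeSet_nonempty.2 hG
    refine ⟨e, he, fun S hS => ?_⟩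
    induction e with | _ v a =>
    exact absurd ⟨S, hS.1, s(v, a), hS.2, Sym2.mem_mk_left v a⟩ (hempty ▸ Set.notMem_empty v)
  · obtain ⟨v, ⟨S, hS, e, heS, a, rfl⟩, hdeg⟩ :=
      exists_ncard_neighborSet_inter_le_two htf hci hWfin hne
    exact ⟨s(v, a), adj_of_mem_chordlessCycleSets hS heS,
      subsingleton_of_ncard_neighborSet_inter_le_two hci hWfin hdeg⟩

end ChordlessCycleVertices

/-- In a triangle-free graph in which any two chordless cycles share at most one edge and
which contains a cycle, some edge lies on at most one chordless cycle. -/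
theorem exists_edge_on_at_most_one_chordless_cycle [Fintype V] {G : SimpleGraph V}
    (htf : TriangleFree G) (hci : ChordlessCyclesShareAtMostOneEdge G)
    (hcyc : ∃ (v : V) (c : G.Walk v v), c.IsCycle) :
    ∃ e ∈ G.edgeSet, {S ∈ chordlessCycleSets G | e ∈ S}.ncard ≤ 1 := by
  obtain ⟨v, c, hc⟩ := hcyc
  have hG : G ≠ ⊥ := ne_bot_iff_exists_adj.2 ⟨v, c.snd, c.adj_snd hc.not_nil⟩
  simpa only [Set.ncard_le_one_iff_subsingleton] using
    exists_edge_on_at_most_one_chordless_cycle_general htf hci (Set.toFinite _) hG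
end

section
/- Let G be a connected triangle-free graph in which any two chordless cycles share at most one edge. Then the number of chordless cycles of G equals e(G) − v(G) + 1, where e(G) and v(G) are the numbers of edges and vertices of G. -/
open SimpleGraph
variable {V : Type*}

/-!
Grow a vertex set `S` from a single vertex, adding at each step a vertex `v` adjacent to `S`; every
`S` that occurs is connected. Join two neighbours of `v` in `S` if some chordless cycle inside
`S ∪ {v}` runs through both of them and `v`. This link graph is connected because a shortest path in
`S` between consecutive neighbours of `v` closes up to a chordless cycle. It is acyclic because, for
a chordless cycle `T` and a connected set `X` disjoint from `T`, any two vertices of `T` with a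
neighbour in `X` are adjacent: otherwise, by triangle-freeness, one can shrink `X` until rerouting
`T` through `X` produces a second chordless cycle sharing two edges with `T`. Since two edges at `v`
determine a chordless cycle, the new chordless cycles are the edges of a tree on the new neighbours,
so each step adds one cycle fewer than edges.
-/

section Reachability

/-- `ReachableIn G S u w` says that some walk of `G` from `u` to `w` stays inside `S`. It is
reachability in `G.induce S`, phrased in `V` so that statements about several sets `S` need no
coercions between subtypes. -/
def ReachableIn (G : SimpleGraph V) (S : Set V) (u w : V) : Prop :=
  ∃ p : G.Walk u w, ∀ x ∈ p.support, x ∈ S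

variable {G : SimpleGraph V} {S S' : Set V} {u v w : V}

theorem ReachableIn.refl (hu : u ∈ S) : ReachableIn G S u u :=
  ⟨Walk.nil, by simpa using hu⟩

theorem ReachableIn.symm : ReachableIn G S u w → ReachableIn G S w u :=
  fun ⟨p, hp⟩ ↦ ⟨p.reverse, by simpa using hp⟩

theorem ReachableIn.trans : ReachableIn G S u v → ReachableIn G S v w → ReachableIn G S u w :=
  fun ⟨p, hp⟩ ⟨q, hq⟩ ↦ ⟨p.append q, fun x hx ↦
    ((p.mem_support_append_iff q).1 hx).elim (hp x) (hq x)⟩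

theorem ReachableIn.mono (hS : S ⊆ S') : ReachableIn G S u w → ReachableIn G S' u w :=
  fun ⟨p, hp⟩ ↦ ⟨p, fun x hx ↦ hS (hp x hx)⟩

theorem ReachableIn.left_mem : ReachableIn G S u w → u ∈ S :=
  fun ⟨p, hp⟩ ↦ hp u p.start_mem_support

theorem ReachableIn.head (hu : u ∈ S) (huv : G.Adj u v) (h : ReachableIn G S v w) :
    ReachableIn G S u w := by
  obtain ⟨p, hp⟩ := h
  exact ⟨Walk.cons huv p, by simpa using ⟨hu, hp⟩⟩

theorem reachableIn_support (p : G.Walk u w) {x : V} (hx : x ∈ p.support) :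
    ReachableIn G {z | z ∈ p.support} u x := by
  classical
  exact ⟨p.takeUntil x hx, fun z hz ↦ p.support_takeUntil_subset_support hx hz⟩

theorem reachableIn_support_diff_end {p : G.Walk u w} (hp : p.IsPath) {x : V}
    (hx : x ∈ p.support) (hxw : x ≠ w) : ReachableIn G ({z | z ∈ p.support} \ {w}) u x := by
  classical
  refine ⟨p.takeUntil x hx, fun z hz ↦ ⟨p.support_takeUntil_subset_support hx hz, ?_⟩⟩
  rintro rfl
  exact Walk.endpoint_notMem_support_takeUntil hp hx hxw.symm hz

theorem ReachableIn.exists_adj_mem (h : ReachableIn G S u w) {C : Set V} (hu : u ∉ C)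
    (hw : w ∈ C) : ∃ x, ∃ z ∈ S ∩ C, ReachableIn G (S \ C) u x ∧ G.Adj x z := by
  obtain ⟨p, hp⟩ := h
  induction p with
  | nil => exact absurd hw hu
  | @cons u u' w huu' p ih =>
    have huS : u ∈ S := hp u (Walk.start_mem_support _)
    have hpS : ∀ x ∈ p.support, x ∈ S := fun x hx ↦ hp x (List.mem_cons_of_mem _ hx)
    by_cases hu' : u' ∈ C
    · exact ⟨u, u', ⟨hpS u' p.start_mem_support, hu'⟩, .refl ⟨huS, hu⟩, huu'⟩
    · obtain ⟨x, z, hz, hx, hxz⟩ := ih hu' hw hpS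
      exact ⟨x, z, hz, hx.head ⟨huS, hu⟩ huu', hxz⟩

theorem ReachableIn.exists_adj_of_ne (h : ReachableIn G (insert w S) u w) (huw : u ≠ w) :
    ∃ x, ReachableIn G S u x ∧ G.Adj x w := by
  obtain ⟨x, z, ⟨-, rfl⟩, hx, hxz⟩ := h.exists_adj_mem (C := {w}) huw rfl
  exact ⟨x, hx.mono (by simp), hxz⟩

theorem induction_on_reachable_sets [Finite V] (hconn : G.Connected) (r : V)
    {P : Set V → Prop} (singleton : P {r})
    (insert : ∀ S v, (∀ u ∈ S, ReachableIn G S u r) → v ∉ S → (G.neighborSet v ∩ S).Nonempty →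
      P S → P (insert v S)) : P Set.univ := by
  obtain ⟨S, ⟨hrS, hreach, hPS⟩, hmax⟩ := Set.Finite.exists_maximal
    (s := {S | r ∈ S ∧ (∀ u ∈ S, ReachableIn G S u r) ∧ P S}) (Set.toFinite _)
    ⟨{r}, rfl, by rintro u rfl; exact .refl rfl, singleton⟩
  suffices hS : S = Set.univ from hS ▸ hPS
  rw [Set.eq_univ_iff_forall]
  by_contra! ⟨x, hx⟩
  obtain ⟨p⟩ := hconn.preconnected r x
  obtain ⟨d, -, haS, hvS⟩ := p.exists_boundary_dart S hrS hx
  have hgrow : ∀ u ∈ Insert.insert d.snd S, ReachableIn G (Insert.insert d.snd S) u r := by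
    rintro u (rfl | hu)
    · exact ((hreach _ haS).mono (Set.subset_insert _ _)).head (Set.mem_insert _ _) d.adj.symm
    · exact (hreach u hu).mono (Set.subset_insert _ _)
  exact hvS (hmax ⟨.inr hrS, hgrow, insert S d.snd hreach hvS ⟨d.fst, d.adj.symm, haS⟩ hPS⟩
    (Set.subset_insert _ _) (Set.mem_insert _ _))

end Reachability

section ShortestWalks

variable {G : SimpleGraph V} {a b : V} {p : G.Walk a b}

theorem isPath_of_forall_length_le
    (hmin : ∀ q : G.Walk a b, q.support ⊆ p.support → p.length ≤ q.length) : p.IsPath := by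
  classical
  rw [← p.bypass_eq_self_of_length_le_length_bypass (hmin _ p.support_bypass_subset_support)]
  exact p.bypass_isPath

theorem mk_getVert_mem_edges_of_forall_length_le
    (hmin : ∀ q : G.Walk a b, q.support ⊆ p.support → p.length ≤ q.length) {i j : ℕ}
    (hij : i < j) (hj : j ≤ p.length) (hadj : G.Adj (p.getVert i) (p.getVert j)) :
    s(p.getVert i, p.getVert j) ∈ p.edges := by
  let shortcut := (p.take i).append (Walk.cons hadj (p.drop j))
  have hsupp : shortcut.support ⊆ p.support := by
    intro x hx
    rw [Walk.mem_support_append_iff, Walk.support_cons, List.mem_cons] at hx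
    rcases hx with hx | rfl | hx
    · exact (p.isSubwalk_take i).support_subset hx
    · exact p.getVert_mem_support i
    · exact (p.isSubwalk_drop j).support_subset hx
  have hlength := hmin shortcut hsupp
  simp only [shortcut, Walk.length_append, Walk.take_length, Walk.length_cons,
    Walk.drop_length] at hlength
  obtain rfl : j = i + 1 := by omega
  have hi : i < p.edges.length := by rw [Walk.length_edges]; omega
  exact Walk.getElem_edges hi ▸ List.getElem_mem hi

theorem isChordless_of_forall_length_le
    (hmin : ∀ q : G.Walk a b, q.support ⊆ p.support → p.length ≤ q.length) : p.IsChordless := by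
  rw [Walk.isChordless_iff_forall_mem_edges]
  intro x y hx hy hxy
  obtain ⟨i, rfl, hi⟩ := Walk.mem_support_iff_exists_getVert.1 hx
  obtain ⟨j, rfl, hj⟩ := Walk.mem_support_iff_exists_getVert.1 hy
  rcases lt_trichotomy i j with hij | rfl | hji
  · exact mk_getVert_mem_edges_of_forall_length_le hmin hij hj hxy
  · exact absurd rfl hxy.ne
  · rw [Sym2.eq_swap]
    exact mk_getVert_mem_edges_of_forall_length_le hmin hji hi hxy.symm

theorem ReachableIn.exists_isPath_isChordless {S : Set V} (h : ReachableIn G S a b) :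
    ∃ p : G.Walk a b, p.IsPath ∧ p.IsChordless ∧ ∀ x ∈ p.support, x ∈ S := by
  obtain ⟨p, hpS, hmin⟩ := exists_minimalFor_of_wellFoundedLT
    (fun p : G.Walk a b ↦ ∀ x ∈ p.support, x ∈ S) Walk.length h
  have hmin' (q : G.Walk a b) (hq : q.support ⊆ p.support) : p.length ≤ q.length :=
    (le_total p.length q.length).elim id (hmin fun x hx ↦ hpS x (hq hx))
  exact ⟨p, isPath_of_forall_length_le hmin', isChordless_of_forall_length_le hmin', hpS⟩

end ShortestWalks

section Arcs

/-- The vertices incident to some edge of `T`; for the edge set of a cycle, the vertices of the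
cycle. -/
def endpoints (T : Set (Sym2 V)) : Set V := {x | ∃ e ∈ T, x ∈ e}

/-- The edges of the closed walk that follows `p` and returns to its start through `v`. -/
def cycleEdges {G : SimpleGraph V} (v : V) {a b : V} (p : G.Walk a b) : Set (Sym2 V) :=
  {s(v, a), s(v, b)} ∪ p.edgeSet

/-- The walk `p` is what remains of a chordless cycle of `G` after deleting its vertex `v`: a
chordless path avoiding `v`, whose only neighbours of `v` are its two distinct ends. -/
structure IsChordlessArc {G : SimpleGraph V} (v : V) {a b : V} (p : G.Walk a b) : Prop where
  isPath : p.IsPath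
  isChordless : p.IsChordless
  ne : a ≠ b
  notMem : v ∉ p.support
  adj_start : G.Adj v a
  adj_end : G.Adj v b
  eq_or_eq_of_adj : ∀ x ∈ p.support, G.Adj v x → x = a ∨ x = b

variable {G : SimpleGraph V} {v a b x : V} {p : G.Walk a b} {T : Set (Sym2 V)}

theorem start_mem_cycleEdges (v : V) (p : G.Walk a b) : s(v, a) ∈ cycleEdges v p :=
  .inl (.inl rfl)

theorem end_mem_cycleEdges (v : V) (p : G.Walk a b) : s(v, b) ∈ cycleEdges v p :=
  .inl (.inr rfl)

theorem cycleEdges_reverse (v : V) (p : G.Walk a b) :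
    cycleEdges v p.reverse = cycleEdges v p := by
  rw [cycleEdges, cycleEdges, Walk.edgeSet_reverse, Set.pair_comm]

theorem setOf_mem_edges_cons_concat (hva : G.Adj v a) (hbv : G.Adj b v) :
    {e | e ∈ (Walk.cons hva (p.concat hbv)).edges} = cycleEdges v p := by
  ext e
  simp only [cycleEdges, Set.mem_ofPred_eq, Walk.edges_cons, Walk.edges_concat, List.mem_cons,
    List.concat_eq_append, List.mem_append, List.not_mem_nil, or_false, Set.mem_union,
    Set.mem_insert_iff, Set.mem_singleton_iff, Walk.mem_edgeSet, Sym2.eq_swap (a := b)]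
  tauto

theorem mem_endpoints_cycleEdges : x ∈ endpoints (cycleEdges v p) ↔ x = v ∨ x ∈ p.support := by
  simp only [endpoints, cycleEdges, Set.mem_ofPred_eq, Set.mem_union, Set.mem_insert_iff,
    Set.mem_singleton_iff, Walk.mem_edgeSet, or_and_right, exists_or, exists_eq_left,
    Sym2.mem_iff, Walk.mem_support_iff_exists_mem_edges (p := p)]
  have ha : a = b ∨ ∃ e ∈ p.edges, a ∈ e :=
    Walk.mem_support_iff_exists_mem_edges.1 p.start_mem_support
  grind

theorem IsChordlessArc.reverse (h : IsChordlessArc v p) : IsChordlessArc v p.reverse where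
  isPath := h.isPath.reverse
  isChordless := by
    simpa [Walk.isChordless_iff_forall_mem_edges] using
      Walk.isChordless_iff_forall_mem_edges.1 h.isChordless
  ne := h.ne.symm
  notMem := by simpa using h.notMem
  adj_start := h.adj_end
  adj_end := h.adj_start
  eq_or_eq_of_adj x hx hvx := (h.eq_or_eq_of_adj x (by simpa using hx) hvx).symm

theorem isChordlessCycle_cons_concat_iff (hva : G.Adj v a) (hbv : G.Adj b v) :
    IsChordlessCycle (Walk.cons hva (p.concat hbv)) ↔ IsChordlessArc v p := by
  have hv_edges (hv : v ∉ p.support) (x : V) : s(v, x) ∉ p.edges :=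
    fun h ↦ hv (p.fst_mem_support_of_mem_edges h)
  have hva_ne := hva.ne
  have hbv_ne := hbv.ne
  simp only [IsChordlessCycle, Walk.cons_isCycle_iff, Walk.concat_isPath_iff, Walk.edges_cons,
    Walk.edges_concat, Walk.support_cons, Walk.support_concat, List.concat_eq_append,
    List.mem_cons, List.mem_append, List.not_mem_nil, or_false]
  constructor
  · rintro ⟨⟨⟨hpath, hv⟩, hne⟩, hchord⟩
    refine ⟨hpath, Walk.isChordless_iff_forall_mem_edges.2 ?_, ?_, hv, hva, hbv.symm, ?_⟩
    · intro x y hx hy hxy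
      have hvxy : v ∉ s(x, y) := by
        rw [Sym2.mem_iff]
        rintro (rfl | rfl) <;> contradiction
      rcases hchord x y (by tauto) (by tauto) hxy with h | h | h
      · exact absurd (h ▸ Sym2.mem_mk_left v a) hvxy
      · exact h
      · exact absurd (h ▸ Sym2.mem_mk_right b v) hvxy
    · rintro rfl
      exact hne (.inr Sym2.eq_swap)
    · intro x hx hvx
      have hedge := hchord v x (by tauto) (by tauto) hvx
      grind
  · intro h
    have hv := h.notMem
    have hab := h.ne
    refine ⟨⟨⟨h.isPath, hv⟩, by grind⟩, fun x y hx hy hxy ↦ ?_⟩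
    have hx_end := h.eq_or_eq_of_adj x
    have hy_end := h.eq_or_eq_of_adj y
    have hedge := h.isChordless.mem_edges (u' := x) (v' := y)
    have hyx := hxy.symm
    have hxy_ne := hxy.ne
    grind

theorem IsChordlessArc.cycleEdges_mem (h : IsChordlessArc v p) :
    cycleEdges v p ∈ chordlessCycleSets G :=
  ⟨v, _, (isChordlessCycle_cons_concat_iff h.adj_start h.adj_end.symm).2 h,
    (setOf_mem_edges_cons_concat _ _).symm⟩

theorem exists_eq_cons_concat_of_isCycle {c : G.Walk v v} (hc : c.IsCycle) :
    ∃ (a b : V) (hva : G.Adj v a) (p : G.Walk a b) (hbv : G.Adj b v),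
      c = Walk.cons hva (p.concat hbv) := by
  cases c with
  | nil => exact absurd hc Walk.not_isCycle_nil
  | @cons _ a _ hva q =>
    have hq : ¬ q.Nil := Walk.not_nil_of_ne hva.ne'
    exact ⟨a, _, hva, q.dropLast, q.adj_penultimate hq, by rw [Walk.concat_dropLast]⟩

theorem exists_isChordlessArc (hT : T ∈ chordlessCycleSets G) (hv : v ∈ endpoints T) :
    ∃ (a b : V) (p : G.Walk a b), IsChordlessArc v p ∧ T = cycleEdges v p := by
  classical
  obtain ⟨w, c, ⟨hcycle, hchord⟩, rfl⟩ := hT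
  obtain ⟨e, he, hve⟩ := hv
  have hvc : v ∈ c.support := c.mem_support_of_mem_edges he hve
  have hedges : ∀ e, e ∈ (c.rotate v hvc).edges ↔ e ∈ c.edges :=
    fun e ↦ (c.rotate_edges v hvc).perm.mem_iff
  have hrotate : IsChordlessCycle (c.rotate v hvc) :=
    ⟨(Walk.isCycle_rotate hvc).2 hcycle, by simpa only [Walk.mem_support_rotate_iff, hedges]⟩
  obtain ⟨a, b, hva, p, hbv, heq⟩ := exists_eq_cons_concat_of_isCycle hrotate.1
  refine ⟨a, b, p, (isChordlessCycle_cons_concat_iff hva hbv).1 (heq ▸ hrotate), ?_⟩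
  rw [← setOf_mem_edges_cons_concat hva hbv, ← heq]
  exact Set.ext fun e ↦ (hedges e).symm

theorem IsChordlessArc.mk_mem_cycleEdges_iff (h : IsChordlessArc v p) :
    s(v, x) ∈ cycleEdges v p ↔ x = a ∨ x = b := by
  have hp : s(v, x) ∉ p.edges := fun hvx ↦ h.notMem (p.fst_mem_support_of_mem_edges hvx)
  simp [cycleEdges, hp, h.adj_start.ne, h.adj_end.ne]

theorem IsChordlessArc.eq_of_adj_start {a' : V} {haa' : G.Adj a a'} {p : G.Walk a' b}
    (h : IsChordlessArc v (Walk.cons haa' p)) (hx : x ∈ p.support) (hax : G.Adj a x) : x = a' := by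
  have ha : a ∉ p.support := ((Walk.cons_isPath_iff _ _).1 h.isPath).2
  have hedge := h.isChordless.mem_edges (Walk.start_mem_support _) (List.mem_cons_of_mem a hx) hax
  rcases List.mem_cons.1 hedge with hedge | hedge
  · exact Sym2.congr_right.1 hedge
  · exact absurd (p.fst_mem_support_of_mem_edges hedge) ha

end Arcs

section Attachments

variable {G : SimpleGraph V} {T : Set (Sym2 V)}

theorem TriangleFree.not_adj_s6 (htf : TriangleFree G) {x y z : V} (hxy : G.Adj x y)
    (hxz : G.Adj x z) : ¬ G.Adj y z := by
  classical
  intro hyz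
  obtain ⟨v, c, hc, hlength⟩ := is3Clique_iff_exists_cycle_length_three.1
    ⟨{x, y, z}, is3Clique_triple_iff.2 ⟨hxy, hxz, hyz⟩⟩
  exact htf v c hc hlength

theorem ChordlessCyclesShareAtMostOneEdge.eq_of_mem_s6 (hshare : ChordlessCyclesShareAtMostOneEdge G)
    {T' : Set (Sym2 V)} (hT : T ∈ chordlessCycleSets G) (hT' : T' ∈ chordlessCycleSets G)
    {v a b : V} (hab : a ≠ b) (haT : s(v, a) ∈ T) (haT' : s(v, a) ∈ T')
    (hbT : s(v, b) ∈ T) (hbT' : s(v, b) ∈ T') : T = T' := by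
  by_contra hne
  have hfin : T.Finite := by
    obtain ⟨w, c, -, rfl⟩ := hT
    exact c.edges.finite_toSet
  have hle := hshare T hT T' hT' hne
  rw [Set.ncard_le_one (hfin.inter_of_left T')] at hle
  exact hab (Sym2.congr_right.1 (hle _ ⟨haT, haT'⟩ _ ⟨hbT, hbT'⟩))

theorem IsChordlessArc.exists_adj_start (hshare : ChordlessCyclesShareAtMostOneEdge G)
    {y a d : V} {p : G.Walk a d} (hp : IsChordlessArc y p) {y' u w : V} (hy' : y' ∈ p.support)
    (hy'a : y' ≠ a) (hy'd : y' ≠ d) {X : Set V} (hX : X ⊆ (endpoints (cycleEdges y p))ᶜ)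
    (huw : ReachableIn G X u w) (hyu : G.Adj y u) (hwy' : G.Adj w y') : ∃ x ∈ X, G.Adj a x := by
  -- If `a` had no neighbour in `X`, rerouting the cycle through `X` between `y` and `y'` would give
  -- a second chordless cycle through both edges at `a`, and that cycle misses `d`.
  by_contra! hnadj
  have hXp {x : V} (hx : x ∈ X) : x ≠ y ∧ x ∉ p.support := by
    simpa only [Set.mem_compl_iff, mem_endpoints_cycleEdges, not_or] using hX hx
  cases p with
  | nil => exact hp.ne rfl
  | @cons _ a' _ haa' p =>
    obtain ⟨hpath, ha⟩ := (Walk.cons_isPath_iff _ _).1 hp.isPath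
    obtain ⟨hya, hyp⟩ : y ≠ a ∧ y ∉ p.support := by simpa using hp.notMem
    have hy'p : y' ∈ p.support := by simpa [hy'a] using hy'
    let Z : Set V := insert y (X ∪ ({x | x ∈ p.support} \ {d}))
    have hZ : ReachableIn G Z y a' := by
      have hXZ : X ⊆ Z := fun x hx ↦ .inr (.inl hx)
      have hpZ : {x | x ∈ p.support} \ {d} ⊆ Z := fun x hx ↦ .inr (.inr hx)
      have ha'y' := (reachableIn_support_diff_end hpath hy'p hy'd).mono hpZ
      have hwa' := ha'y'.symm.head (hXZ huw.symm.left_mem) hwy'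
      exact ((huw.mono hXZ).trans hwa').head (Set.mem_insert _ _) hyu
    obtain ⟨q, hq, hqc, hqZ⟩ := hZ.exists_isPath_isChordless
    have hqarc : IsChordlessArc a q := by
      refine ⟨hq, hqc, fun h ↦ hyp (h ▸ p.start_mem_support), fun haq ↦ ?_, hp.adj_start.symm,
        haa', fun x hx hax ↦ ?_⟩
      · rcases hqZ a haq with h | h | h
        exacts [hya h.symm, (hXp h).2 (Walk.start_mem_support _), ha h.1]
      · rcases hqZ x hx with h | h | h
        · exact .inl h
        · exact absurd hax (hnadj x h)
        · exact .inr (hp.eq_of_adj_start h.1 hax)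
    have heq : cycleEdges y (Walk.cons haa' p) = cycleEdges a q :=
      hshare.eq_of_mem_s6 hp.cycleEdges_mem hqarc.cycleEdges_mem hqarc.ne
        (Sym2.eq_swap ▸ start_mem_cycleEdges _ _) (start_mem_cycleEdges _ _)
        (.inr (by simp)) (end_mem_cycleEdges _ _)
    have hd : d ∈ endpoints (cycleEdges a q) :=
      heq ▸ mem_endpoints_cycleEdges.2 (.inr (Walk.end_mem_support _))
    rcases mem_endpoints_cycleEdges.1 hd with hda | hdq
    · exact hp.ne hda.symm
    · rcases hqZ d hdq with h | h | h
      exacts [hp.adj_end.ne h.symm, (hXp h).2 (Walk.end_mem_support _), h.2 rfl]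

theorem exists_neighbors_adj_mem_of_not_adj (hshare : ChordlessCyclesShareAtMostOneEdge G)
    (hT : T ∈ chordlessCycleSets G) {y y' u w : V} (hy : y ∈ endpoints T) (hy' : y' ∈ endpoints T)
    (hne : y ≠ y') (hnadj : ¬ G.Adj y y') {X : Set V} (hX : X ⊆ (endpoints T)ᶜ)
    (huw : ReachableIn G X u w) (hyu : G.Adj y u) (hwy' : G.Adj w y') :
    ∃ a ∈ endpoints T, ∃ d ∈ endpoints T, a ≠ d ∧ G.Adj y a ∧ G.Adj y d ∧
      (∃ s ∈ X, G.Adj a s) ∧ ∃ t ∈ X, G.Adj d t := by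
  obtain ⟨a, d, p, hp, rfl⟩ := exists_isChordlessArc hT hy
  have hy'p : y' ∈ p.support := (mem_endpoints_cycleEdges.1 hy').resolve_left hne.symm
  have hy'a : y' ≠ a := fun h ↦ hnadj (h ▸ hp.adj_start)
  have hy'd : y' ≠ d := fun h ↦ hnadj (h ▸ hp.adj_end)
  exact ⟨a, mem_endpoints_cycleEdges.2 (.inr p.start_mem_support),
    d, mem_endpoints_cycleEdges.2 (.inr p.end_mem_support), hp.ne, hp.adj_start, hp.adj_end,
    hp.exists_adj_start hshare hy'p hy'a hy'd hX huw hyu hwy',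
    hp.reverse.exists_adj_start hshare (by simpa using hy'p) hy'd hy'a
      (by rwa [cycleEdges_reverse]) huw hyu hwy'⟩

theorem adj_of_adj_mem_support (htf : TriangleFree G) (hshare : ChordlessCyclesShareAtMostOneEdge G)
    (hT : T ∈ chordlessCycleSets G) {u₀ w₀ : V} (q : G.Walk u₀ w₀)
    (hq : {x | x ∈ q.support} ⊆ (endpoints T)ᶜ) {y y' u w : V} (hy : y ∈ endpoints T)
    (hy' : y' ∈ endpoints T) (hne : y ≠ y') (hu : u ∈ q.support) (hw : w ∈ q.support)
    (hyu : G.Adj y u) (hwy' : G.Adj w y') : G.Adj y y' := by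
  induction q generalizing y y' u w with
  | nil =>
    by_contra hnadj
    obtain rfl := List.mem_singleton.1 hu
    obtain rfl := List.mem_singleton.1 hw
    obtain ⟨a, -, d, -, -, hya, -, ⟨s, hs, has⟩, -⟩ := exists_neighbors_adj_mem_of_not_adj hshare hT
      hy hy' hne hnadj hq (reachableIn_support _ hu) hyu hwy'
    obtain rfl := List.mem_singleton.1 hs
    exact htf.not_adj_s6 hya hyu has
  | @cons u₀ u₁ _ h q ih =>
    have hq' : {x | x ∈ q.support} ⊆ (endpoints T)ᶜ := fun x hx ↦ hq (List.mem_cons_of_mem _ hx)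
    -- The neighbours of `y` on the cycle attach to the walk away from `u₀`, hence to its tail.
    have adj_of_adj_head {y y' w : V} (hy : y ∈ endpoints T) (hy' : y' ∈ endpoints T) (hne : y ≠ y')
        (hw : w ∈ (Walk.cons h q).support) (hyu₀ : G.Adj y u₀) (hwy' : G.Adj w y') :
        G.Adj y y' := by
      by_contra hnadj
      obtain ⟨a, haT, d, hdT, had, hya, hyd, ⟨s, hs, has⟩, t, ht, hdt⟩ :=
        exists_neighbors_adj_mem_of_not_adj hshare hT hy hy' hne hnadj hq
          (reachableIn_support _ hw) hyu₀ hwy'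
      have mem_tail {x s : V} (hyx : G.Adj y x) (hxs : G.Adj x s)
          (hs : s ∈ (Walk.cons h q).support) : s ∈ q.support :=
        (List.mem_cons.1 hs).resolve_left fun hs ↦ htf.not_adj_s6 hyx hyu₀ (hs ▸ hxs)
      exact htf.not_adj_s6 hya hyd
        (ih hq' haT hdT had (mem_tail hya has hs) (mem_tail hyd hdt ht) has hdt.symm)
    rcases List.mem_cons.1 hu with rfl | huq
    · exact adj_of_adj_head hy hy' hne hw hyu hwy'
    · rcases List.mem_cons.1 hw with rfl | hwq
      · exact (adj_of_adj_head hy' hy hne.symm hu hwy'.symm hyu.symm).symm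
      · exact ih hq' hy hy' hne huq hwq hyu hwy'

theorem adj_of_reachableIn_compl (htf : TriangleFree G)
    (hshare : ChordlessCyclesShareAtMostOneEdge G) (hT : T ∈ chordlessCycleSets G) {y y' u w : V}
    (hy : y ∈ endpoints T) (hy' : y' ∈ endpoints T) (hne : y ≠ y')
    (huw : ReachableIn G (endpoints T)ᶜ u w) (hyu : G.Adj y u) (hwy' : G.Adj w y') :
    G.Adj y y' := by
  obtain ⟨q, hq⟩ := huw
  exact adj_of_adj_mem_support htf hshare hT q hq hy hy' hne q.start_mem_support
    q.end_mem_support hyu hwy'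

theorem adj_of_reachableIn_insert_compl (htf : TriangleFree G)
    (hshare : ChordlessCyclesShareAtMostOneEdge G) (hT : T ∈ chordlessCycleSets G) {w z z' : V}
    (hw : w ∉ endpoints T) (hz : z ∈ endpoints T) (hz' : z' ∈ endpoints T) (hne : z ≠ z')
    (hwz : ReachableIn G (insert z (endpoints T)ᶜ) w z)
    (hwz' : ReachableIn G (insert z' (endpoints T)ᶜ) w z') : G.Adj z z' := by
  obtain ⟨x, hwx, hxz⟩ := hwz.exists_adj_of_ne fun h ↦ hw (h ▸ hz)
  obtain ⟨x', hwx', hx'z'⟩ := hwz'.exists_adj_of_ne fun h ↦ hw (h ▸ hz')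
  exact adj_of_reachableIn_compl htf hshare hT hz hz' hne (hwx.symm.trans hwx') hxz.symm hx'z'

end Attachments

section MeetingArcs

variable {G : SimpleGraph V} {v w w' : V} {q : G.Walk w w'}

theorem IsChordlessArc.eq_end_of_mem_endpoints (hq : IsChordlessArc v q) (htf : TriangleFree G)
    (hshare : ChordlessCyclesShareAtMostOneEdge G) {T : Set (Sym2 V)}
    (hT : T ∈ chordlessCycleSets G) (hv : v ∈ endpoints T) (hw : w ∉ endpoints T) {x : V}
    (hx : x ∈ q.support) (hxT : x ∈ endpoints T) : x = w' := by
  by_contra hxw'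
  obtain ⟨y, z, ⟨⟨hzq, hzw'⟩, hzT⟩, hwy, hyz⟩ :=
    (reachableIn_support_diff_end hq.isPath hx hxw').exists_adj_mem hw hxT
  have hvz : G.Adj v z := adj_of_reachableIn_compl htf hshare hT hv hzT
    (fun h ↦ hq.notMem (h ▸ hzq)) (hwy.mono fun _ h ↦ h.2) hq.adj_start hyz
  rcases hq.eq_or_eq_of_adj z hzq hvz with rfl | rfl
  exacts [hw hzT, hzw' rfl]

theorem IsChordlessArc.reachableIn_insert_compl (hq : IsChordlessArc v q) (htf : TriangleFree G)
    (hshare : ChordlessCyclesShareAtMostOneEdge G) {T : Set (Sym2 V)}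
    (hT : T ∈ chordlessCycleSets G) (hv : v ∈ endpoints T) (hw : w ∉ endpoints T) :
    ReachableIn G (insert w' (endpoints T)ᶜ) w w' :=
  ⟨q, fun _ hx ↦ or_iff_not_imp_right.2 fun hxT ↦
    hq.eq_end_of_mem_endpoints htf hshare hT hv hw hx (not_not.1 hxT)⟩

theorem IsChordlessArc.reachableIn_insert_start_compl (htf : TriangleFree G)
    (hshare : ChordlessCyclesShareAtMostOneEdge G) {a b : V} {p : G.Walk a b}
    (hp : IsChordlessArc v p) (hq : IsChordlessArc v q) (hne : ¬ (w = a ∧ w' = b))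
    (hwa : ReachableIn G (insert a (endpoints (cycleEdges v p))ᶜ) w a) :
    ReachableIn G (insert a (endpoints (cycleEdges v p))ᶜ) w' a := by
  set T := cycleEdges v p
  have hT : T ∈ chordlessCycleSets G := hp.cycleEdges_mem
  have hv : v ∈ endpoints T := mem_endpoints_cycleEdges.2 (.inl rfl)
  have haT : a ∈ endpoints T := mem_endpoints_cycleEdges.2 (.inr p.start_mem_support)
  by_cases hw'T : w' ∈ endpoints T
  · have hw'p := (mem_endpoints_cycleEdges.1 hw'T).resolve_left hq.adj_end.ne'
    rcases hp.eq_or_eq_of_adj w' hw'p hq.adj_end with rfl | rfl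
    · exact .refl (Set.mem_insert _ _)
    · have hw : w ∉ endpoints T := hwa.left_mem.resolve_left fun h ↦ hne ⟨h, rfl⟩
      have hab := adj_of_reachableIn_insert_compl htf hshare hT hw haT hw'T hp.ne hwa
        (hq.reachableIn_insert_compl htf hshare hT hv hw)
      exact absurd hab (htf.not_adj_s6 hp.adj_start hp.adj_end)
  · have hw'w := hq.reverse.reachableIn_insert_compl htf hshare hT hv hw'T
    exact (hw'w.mono (Set.insert_subset hwa.left_mem (Set.subset_insert _ _))).trans hwa

end MeetingArcs

section LinkGraph

/-- The graph on the neighbours of `v` in `S` in which two of them are adjacent when they are the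
ends of a chordless arc at `v` inside `S`. Its edges encode the chordless cycles through `v` that
appear when `v` is added to `S`. -/
def linkGraph (G : SimpleGraph V) (S : Set V) (v : V) :
    SimpleGraph ↑(G.neighborSet v ∩ S) where
  Adj a b := ∃ p : G.Walk (a : V) b, IsChordlessArc v p ∧ ∀ x ∈ p.support, x ∈ S
  symm := ⟨fun _ _ ⟨p, hp, hpS⟩ ↦ ⟨p.reverse, hp.reverse, by simpa using hpS⟩⟩
  loopless := ⟨fun _ ⟨_, hp, _⟩ ↦ hp.ne rfl⟩

variable {G : SimpleGraph V} {S : Set V} {v : V}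

theorem isAcyclic_linkGraph (htf : TriangleFree G) (hshare : ChordlessCyclesShareAtMostOneEdge G) :
    (linkGraph G S v).IsAcyclic := by
  rw [isAcyclic_iff_forall_adj_isBridge]
  rintro a b ⟨p, hp, -⟩
  rw [isBridge_iff, reachable_iff_reflTransGen]
  intro hab
  -- Every vertex reachable from `a` without the edge `ab` reaches `a` in `G` off the cycle.
  have reachableIn_start (w : ↑(G.neighborSet v ∩ S))
      (haw : Relation.ReflTransGen ((linkGraph G S v).deleteEdges {s(a, b)}).Adj a w) :
      ReachableIn G (insert ↑a (endpoints (cycleEdges v p))ᶜ) w a := by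
    induction haw with
    | refl => exact .refl (Set.mem_insert _ _)
    | tail _ hww' ih =>
      obtain ⟨⟨q, hq, -⟩, hne⟩ := deleteEdges_adj.1 hww'
      refine hp.reachableIn_insert_start_compl htf hshare hq (fun ⟨h, h'⟩ ↦ hne ?_) ih
      rw [Subtype.ext h, Subtype.ext h', Set.mem_singleton_iff]
  rcases (reachableIn_start b hab).left_mem with h | h
  · exact hp.ne h.symm
  · exact h (mem_endpoints_cycleEdges.2 (.inr p.end_mem_support))

theorem reachable_linkGraph (hv : v ∉ S) {a b : V} (p : G.Walk a b) (hp : ∀ x ∈ p.support, x ∈ S)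
    (ha : a ∈ G.neighborSet v ∩ S) (hb : b ∈ G.neighborSet v ∩ S) :
    (linkGraph G S v).Reachable ⟨a, ha⟩ ⟨b, hb⟩ := by
  classical
  induction hn : p.length using Nat.strong_induction_on generalizing a b with
  | _ n ih =>
  subst hn
  by_cases hmid : ∃ x ∈ p.support, G.Adj v x ∧ x ≠ a ∧ x ≠ b
  · obtain ⟨x, hx, hvx, hxa, hxb⟩ := hmid
    have hx' : x ∈ G.neighborSet v ∩ S := ⟨hvx, hp x hx⟩
    exact (ih _ (p.length_takeUntil_lt_length hx hxb) (p.takeUntil x hx)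
        (fun y hy ↦ hp y (p.support_takeUntil_subset_support hx hy)) ha hx' rfl).trans
      (ih _ (p.length_dropUntil_lt_length hx hxa) (p.dropUntil x hx)
        (fun y hy ↦ hp y (p.support_dropUntil_subset_support hx hy)) hx' hb rfl)
  · push Not at hmid
    obtain rfl | hab := eq_or_ne a b
    · rfl
    obtain ⟨q, hq, hqc, hqp⟩ :=
      ReachableIn.exists_isPath_isChordless (S := {x | x ∈ p.support}) ⟨p, fun _ ↦ id⟩
    have harc : IsChordlessArc v q := ⟨hq, hqc, hab, fun h ↦ hv (hp v (hqp v h)), ha.1, hb.1,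
      fun x hx hvx ↦ or_iff_not_imp_left.2 (hmid x (hqp x hx) hvx)⟩
    exact Adj.reachable ⟨q, harc, fun x hx ↦ hp x (hqp x hx)⟩

theorem isTree_linkGraph (htf : TriangleFree G) (hshare : ChordlessCyclesShareAtMostOneEdge G)
    (hv : v ∉ S) (hne : (G.neighborSet v ∩ S).Nonempty)
    (hS : ∀ u ∈ S, ∀ w ∈ S, ReachableIn G S u w) : (linkGraph G S v).IsTree where
  connected := by
    have := hne.to_subtype
    refine ⟨fun a b ↦ ?_⟩
    obtain ⟨p, hp⟩ := hS a a.2.2 b b.2.2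
    exact reachable_linkGraph hv p hp a.2 b.2
  isAcyclic := isAcyclic_linkGraph htf hshare

end LinkGraph

section Counting

/-- The edge sets of the chordless cycles of `G` all of whose vertices lie in `S`. -/
def cyclesIn (G : SimpleGraph V) (S : Set V) : Set (Set (Sym2 V)) :=
  {T ∈ chordlessCycleSets G | endpoints T ⊆ S}

/-- The edge sets of the chordless cycles of `G` that lie in `S` and pass through `v`. -/
def cyclesThrough (G : SimpleGraph V) (v : V) (S : Set V) : Set (Set (Sym2 V)) :=
  {T ∈ cyclesIn G S | v ∈ endpoints T}

variable {G : SimpleGraph V} {S : Set V} {v : V}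

theorem exists_cycle_of_mem_edgeSet_linkGraph {e : Sym2 ↑(G.neighborSet v ∩ S)}
    (he : e ∈ (linkGraph G S v).edgeSet) :
    ∃ T ∈ cyclesThrough G v (insert v S),
      ∀ x : ↑(G.neighborSet v ∩ S), s(v, ↑x) ∈ T ↔ x ∈ e := by
  induction e with | _ a b
  obtain ⟨p, hp, hpS⟩ := he
  refine ⟨cycleEdges v p, ⟨⟨hp.cycleEdges_mem, fun x hx ↦ ?_⟩,
    mem_endpoints_cycleEdges.2 (.inl rfl)⟩, fun x ↦ ?_⟩
  · exact (mem_endpoints_cycleEdges.1 hx).imp_right (hpS x)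
  · rw [hp.mk_mem_cycleEdges_iff, Sym2.mem_iff, Subtype.ext_iff, Subtype.ext_iff]

theorem exists_mem_edgeSet_linkGraph {T : Set (Sym2 V)}
    (hT : T ∈ cyclesThrough G v (insert v S)) :
    ∃ e ∈ (linkGraph G S v).edgeSet, ∀ x : ↑(G.neighborSet v ∩ S), s(v, ↑x) ∈ T ↔ x ∈ e := by
  obtain ⟨⟨hT, hTS⟩, hv⟩ := hT
  obtain ⟨a, b, p, hp, rfl⟩ := exists_isChordlessArc hT hv
  have hpS : ∀ x ∈ p.support, x ∈ S := fun x hx ↦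
    (hTS (mem_endpoints_cycleEdges.2 (.inr hx))).resolve_left fun h ↦ hp.notMem (h ▸ hx)
  refine ⟨s(⟨a, hp.adj_start, hpS a p.start_mem_support⟩, ⟨b, hp.adj_end, hpS b p.end_mem_support⟩),
    ⟨p, hp, hpS⟩, fun x ↦ ?_⟩
  rw [hp.mk_mem_cycleEdges_iff, Sym2.mem_iff, Subtype.ext_iff, Subtype.ext_iff]

theorem ncard_edgeSet_linkGraph (hshare : ChordlessCyclesShareAtMostOneEdge G) :
    (linkGraph G S v).edgeSet.ncard = (cyclesThrough G v (insert v S)).ncard := by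
  choose! f hf hfe using fun e (he : e ∈ (linkGraph G S v).edgeSet) ↦
    exists_cycle_of_mem_edgeSet_linkGraph he
  have hf_eq {e T} (he : e ∈ (linkGraph G S v).edgeSet) (hT : T ∈ chordlessCycleSets G)
      (hTe : ∀ x : ↑(G.neighborSet v ∩ S), s(v, ↑x) ∈ T ↔ x ∈ e) : f e = T := by
    have hfe := hfe e he
    have hfT := (hf e he).1.1
    induction e with | _ a b
    have hab : (a : V) ≠ b := Subtype.coe_ne_coe.2 ((mem_edgeSet _).1 he).ne
    exact hshare.eq_of_mem_s6 hfT hT hab ((hfe a).2 (Sym2.mem_mk_left a b))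
      ((hTe a).2 (Sym2.mem_mk_left a b)) ((hfe b).2 (Sym2.mem_mk_right a b))
      ((hTe b).2 (Sym2.mem_mk_right a b))
  refine Set.ncard_congr (fun e _ ↦ f e) (fun e he ↦ hf e he) (fun e e' he he' h ↦ ?_) ?_
  · exact Sym2.ext fun x ↦ by rw [← hfe e he, ← hfe e' he', h]
  · intro T hT
    obtain ⟨e, he, hTe⟩ := exists_mem_edgeSet_linkGraph hT
    exact ⟨e, he, hf_eq he hT.1.1 hTe⟩

theorem ncard_cyclesIn_insert [Finite V] (hv : v ∉ S) :
    (cyclesIn G (insert v S)).ncard =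
      (cyclesIn G S).ncard + (cyclesThrough G v (insert v S)).ncard := by
  have hunion : cyclesIn G (insert v S) =
      cyclesIn G S ∪ cyclesThrough G v (insert v S) := by
    ext T
    by_cases hvT : v ∈ endpoints T
    · have hTS : ¬ endpoints T ⊆ S := fun h ↦ hv (h hvT)
      simp [cyclesIn, cyclesThrough, hvT, hTS]
    · simp [cyclesIn, cyclesThrough, hvT, Set.subset_insert_iff_of_notMem hvT]
  rw [← Set.ncard_union_eq, ← hunion]
  exact Set.disjoint_left.2 fun T hT hT' ↦ hv (hT.2 hT'.2)

theorem ncard_edgeSet_inter_sym2_insert [Finite V] (hv : v ∉ S) :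
    (G.edgeSet ∩ (insert v S).sym2).ncard =
      (G.neighborSet v ∩ S).ncard + (G.edgeSet ∩ S.sym2).ncard := by
  have hunion : G.edgeSet ∩ (insert v S).sym2 =
      (fun x ↦ s(v, x)) '' (G.neighborSet v ∩ S) ∪ G.edgeSet ∩ S.sym2 := by
    rw [Set.sym2_insert, Set.inter_union_distrib_left]
    congr 1
    ext e
    constructor
    · rintro ⟨he, x, rfl | hx, rfl⟩
      exacts [absurd he G.irrefl, ⟨x, ⟨he, hx⟩, rfl⟩]
    · rintro ⟨x, ⟨hvx, hx⟩, rfl⟩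
      exact ⟨hvx, x, .inr hx, rfl⟩
  rw [hunion, Set.ncard_union_eq, Set.ncard_image_of_injective]
  · exact fun x y h ↦ Sym2.congr_right.1 h
  · rw [Set.disjoint_left]
    rintro _ ⟨x, -, rfl⟩ ⟨-, hvx⟩
    exact hv hvx.1

theorem cyclesIn_singleton (r : V) : cyclesIn G {r} = ∅ := by
  rw [Set.eq_empty_iff_forall_notMem]
  rintro _ ⟨⟨v, c, hc, rfl⟩, hr⟩
  obtain ⟨a, b, hva, p, hbv, rfl⟩ := exists_eq_cons_concat_of_isCycle hc.1
  have hedge : s(v, a) ∈ (Walk.cons hva (p.concat hbv)).edges := List.mem_cons_self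
  have hv : v = r := hr ⟨_, hedge, Sym2.mem_mk_left v a⟩
  have ha : a = r := hr ⟨_, hedge, Sym2.mem_mk_right v a⟩
  exact hva.ne (hv.trans ha.symm)

theorem ncard_cyclesThrough_add_one [Finite V] (htf : TriangleFree G)
    (hshare : ChordlessCyclesShareAtMostOneEdge G) (hv : v ∉ S)
    (hne : (G.neighborSet v ∩ S).Nonempty) (hS : ∀ u ∈ S, ∀ w ∈ S, ReachableIn G S u w) :
    (cyclesThrough G v (insert v S)).ncard + 1 = (G.neighborSet v ∩ S).ncard := by
  have htree := isTree_linkGraph htf hshare hv hne hS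
  rw [← ncard_edgeSet_linkGraph hshare, ← Nat.card_coe_set_eq, ← Nat.card_coe_set_eq]
  exact (isTree_iff_connected_and_card.1 htree).2

theorem ncard_cyclesIn_add_ncard_insert [Finite V] (htf : TriangleFree G)
    (hshare : ChordlessCyclesShareAtMostOneEdge G) (hv : v ∉ S)
    (hne : (G.neighborSet v ∩ S).Nonempty) (hS : ∀ u ∈ S, ∀ w ∈ S, ReachableIn G S u w)
    (h : (cyclesIn G S).ncard + S.ncard = (G.edgeSet ∩ S.sym2).ncard + 1) :
    (cyclesIn G (insert v S)).ncard + (insert v S).ncard =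
      (G.edgeSet ∩ (insert v S).sym2).ncard + 1 := by
  have hnew := ncard_cyclesThrough_add_one htf hshare hv hne hS
  rw [ncard_cyclesIn_insert hv, ncard_edgeSet_inter_sym2_insert hv, Set.ncard_insert_of_notMem hv]
  omega

end Counting

/-- A connected triangle-free graph in which any two chordless cycles share at most one
edge has exactly `e(G) - v(G) + 1` chordless cycles. -/
theorem card_chordless_cycles_eq [Fintype V] {G : SimpleGraph V}
    (hconn : G.Connected) (htf : TriangleFree G)
    (hci : ChordlessCyclesShareAtMostOneEdge G) :
    ((chordlessCycleSets G).ncard : ℤ) = (G.edgeSet.ncard : ℤ) - (Nat.card V : ℤ) + 1 := by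
  obtain ⟨r⟩ := hconn.nonempty
  have hcount : (cyclesIn G Set.univ).ncard + (Set.univ : Set V).ncard =
      (G.edgeSet ∩ (Set.univ : Set V).sym2).ncard + 1 := by
    refine induction_on_reachable_sets hconn r
      (P := fun S ↦ (cyclesIn G S).ncard + S.ncard = (G.edgeSet ∩ S.sym2).ncard + 1) ?_ ?_
    · simp [cyclesIn_singleton]
    · intro S v hS hv hne
      exact ncard_cyclesIn_add_ncard_insert htf hci hv hne
        fun u hu w hw ↦ (hS u hu).trans (hS w hw).symm
  have huniv : cyclesIn G Set.univ = chordlessCycleSets G := by simp [cyclesIn]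
  rw [huniv, Set.sym2_univ, Set.inter_univ, Set.ncard_univ] at hcount
  omega
end

section
/- Every bipartite outerplanar graph is a CI graph, i.e., any two chordless cycles of a bipartite outerplanar graph share at most one edge. -/
open SimpleGraph
variable {V : Type*}

/-- A topological planar embedding of a graph: an injective placement of the vertices in
the plane together with, for each edge, a simple curve joining the images of its endpoints,
such that the interiors of the curves avoid the vertices and are pairwise disjoint. -/
def IsPlanar (G : SimpleGraph V) : Prop :=
  ∃ (p : V → EuclideanSpace ℝ (Fin 2)) (c : Sym2 V → ℝ → EuclideanSpace ℝ (Fin 2)),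
    Function.Injective p ∧
    (∀ e ∈ G.edgeSet, ContinuousOn (c e) (Set.Icc (0:ℝ) 1) ∧
      Set.InjOn (c e) (Set.Icc (0:ℝ) 1)) ∧
    (∀ u w, G.Adj u w →
      (c s(u, w) 0 = p u ∧ c s(u, w) 1 = p w) ∨
      (c s(u, w) 0 = p w ∧ c s(u, w) 1 = p u)) ∧
    (∀ e ∈ G.edgeSet, ∀ t ∈ Set.Ioo (0:ℝ) 1, c e t ∉ Set.range p) ∧
    (∀ e ∈ G.edgeSet, ∀ f ∈ G.edgeSet, e ≠ f →
      ∀ s ∈ Set.Ioo (0:ℝ) 1, ∀ t ∈ Set.Ioo (0:ℝ) 1, c e s ≠ c f t)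

/-- An outerplanar embedding: a planar embedding with all vertices on the unit circle and
the interiors of all edge curves inside the open unit disk. -/
def IsOuterplanar (G : SimpleGraph V) : Prop :=
  ∃ (p : V → EuclideanSpace ℝ (Fin 2)) (c : Sym2 V → ℝ → EuclideanSpace ℝ (Fin 2)),
    Function.Injective p ∧
    (∀ v, ‖p v‖ = 1) ∧
    (∀ e ∈ G.edgeSet, ContinuousOn (c e) (Set.Icc (0:ℝ) 1) ∧
      Set.InjOn (c e) (Set.Icc (0:ℝ) 1)) ∧
    (∀ u w, G.Adj u w →
      (c s(u, w) 0 = p u ∧ c s(u, w) 1 = p w) ∨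
      (c s(u, w) 0 = p w ∧ c s(u, w) 1 = p u)) ∧
    (∀ e ∈ G.edgeSet, ∀ t ∈ Set.Ioo (0:ℝ) 1, ‖c e t‖ < 1) ∧
    (∀ e ∈ G.edgeSet, ∀ t ∈ Set.Ioo (0:ℝ) 1, c e t ∉ Set.range p) ∧
    (∀ e ∈ G.edgeSet, ∀ f ∈ G.edgeSet, e ≠ f →
      ∀ s ∈ Set.Ioo (0:ℝ) 1, ∀ t ∈ Set.Ioo (0:ℝ) 1, c e s ≠ c f t)

/-!
Two edges with interlaced endpoints on the unit circle cannot both be drawn in the disk. For if `f`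
and `g` were disjoint curves in the disk joining interlaced pairs of points of the circle, then
`f s - g t` would have a continuous logarithm on the square; but along each side of the square one
of the two points stays fixed on the circle, so the change of the argument there is explicit, and
the four changes do not add up to zero.

Consequently an edge `uv` separates the vertices on one side of it from those on the other, and a
chordless cycle, which misses `u`, misses `v` or runs along `uv`, stays on one side of it. Given
chordless cycles `c` and `c'` and a vertex `x` of `c'` outside `c`, cut the circle open at `x`. The
extreme vertices of `c` in the resulting linear order are adjacent, and the edge between them has
`x` on one side and the rest of `c` on the other. Hence it contains every vertex shared by `c` and
`c'`, and it is the only edge they can share.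
-/

open scoped unitInterval

section Logarithm

variable {X : Type*} [TopologicalSpace X]

lemma exists_continuous_exp_eq [SimplyConnectedSpace X] [LocallyPathConnectedSpace X] {f : X → ℂ}
    (hf : Continuous f) (hf0 : ∀ x, f x ≠ 0) :
    ∃ L : X → ℂ, Continuous L ∧ ∀ x, Complex.exp (L x) = f x := by
  obtain ⟨x₀⟩ : Nonempty X := inferInstance
  obtain ⟨L, ⟨-, hL⟩, -⟩ := Complex.isCoveringMapOn_exp.existsUnique_continuousMap_lifts
    ⟨f, hf⟩ (a₀ := x₀) (Complex.exp_log (hf0 x₀)) hf0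
  exact ⟨L, L.continuous, congr_fun hL⟩

lemma sub_eq_log_sub_log_of_exp_eq_mul [PreconnectedSpace X] {L w : X → ℂ} (hL : Continuous L)
    (hw : Continuous w) (hslit : ∀ x, w x ∈ Complex.slitPlane) {k : ℂ}
    (hexp : ∀ x, Complex.exp (L x) = k * w x) (x y : X) :
    L x - L y = Complex.log (w x) - Complex.log (w y) := by
  have hquot (x) : Complex.exp (L x - Complex.log (w x)) = k := by
    have hw0 := Complex.slitPlane_ne_zero (hslit x)
    rw [Complex.exp_sub, hexp, Complex.exp_log hw0, mul_div_cancel_right₀ _ hw0]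
  have hconst : L x - Complex.log (w x) = L y - Complex.log (w y) :=
    Complex.isCoveringMap_exp.const_of_comp (hL.sub (hw.clog hslit))
      (fun a b ↦ Subtype.ext ((hquot a).trans (hquot b).symm)) x y
  linear_combination hconst

lemma one_sub_mem_slitPlane {z : ℂ} (hz : ‖z‖ ≤ 1) (hz1 : z ≠ 1) : 1 - z ∈ Complex.slitPlane := by
  rw [Complex.mem_slitPlane_iff, Complex.sub_re, Complex.one_re, sub_pos, Complex.sub_im,
    Complex.one_im, zero_sub, neg_ne_zero]
  by_contra! h
  exact hz1 (Complex.ext (((Complex.re_le_norm z).trans hz).antisymm h.1) h.2)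

lemma im_sub_im_eq_arg_sub_arg [PreconnectedSpace X] {L h : X → ℂ} (hL : Continuous L)
    (hh : Continuous h) (hdisk : ∀ x, ‖h x‖ ≤ 1) {k : ℂ} {β : ℝ}
    (hne : ∀ x, h x ≠ Circle.exp β) (hexp : ∀ x, Complex.exp (L x) = k * (h x - Circle.exp β))
    {x y : X} {ξ η : ℝ} (hx : h x = Circle.exp ξ) (hy : h y = Circle.exp η) :
    (L x).im - (L y).im =
      Complex.arg (1 - Circle.exp (ξ - β)) - Complex.arg (1 - Circle.exp (η - β)) := by
  have hβ : (Circle.exp β : ℂ) ≠ 0 := Circle.coe_ne_zero _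
  have hslit (x) : 1 - h x / Circle.exp β ∈ Complex.slitPlane :=
    one_sub_mem_slitPlane (by simpa using hdisk x) (mt (div_eq_one_iff_eq hβ).1 (hne x))
  have hlog := sub_eq_log_sub_log_of_exp_eq_mul hL (by fun_prop) hslit
    (k := -k * Circle.exp β) (fun x ↦ by rw [hexp]; field_simp; ring) x y
  rw [hx, hy, ← Circle.coe_div, ← Circle.coe_div, ← Circle.exp_sub, ← Circle.exp_sub] at hlog
  simpa only [Complex.sub_im, Complex.log_im] using congr_arg Complex.im hlog

end Logarithm

section CrossingCurves

lemma arg_one_sub_circleExp_of_pos {t : ℝ} (ht0 : 0 < t) (ht : t < 2 * Real.pi) :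
    Complex.arg (1 - Circle.exp t) = (t - Real.pi) / 2 := by
  have hpolar : (1 - Circle.exp t : ℂ) = (2 * Real.sin (t / 2) : ℝ) *
      (Complex.cos ((t - Real.pi) / 2 : ℝ) + Complex.sin ((t - Real.pi) / 2 : ℝ) * Complex.I) := by
    have hshift : (t - Real.pi) / 2 = t / 2 - Real.pi / 2 := by ring
    have hcos : Real.cos t = 1 - 2 * Real.sin (t / 2) ^ 2 := by
      rw [← Real.cos_two_mul_eq_one_sub, mul_div_cancel₀ _ two_ne_zero]
    have hsin : Real.sin t = 2 * Real.sin (t / 2) * Real.cos (t / 2) := by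
      rw [← Real.sin_two_mul, mul_div_cancel₀ _ two_ne_zero]
    rw [Circle.coe_exp, Complex.exp_mul_I, ← Complex.ofReal_cos, ← Complex.ofReal_sin,
      ← Complex.ofReal_cos, ← Complex.ofReal_sin, hshift, Real.cos_sub_pi_div_two,
      Real.sin_sub_pi_div_two, hcos, hsin]
    push_cast
    ring
  have hsin_pos : 0 < Real.sin (t / 2) := Real.sin_pos_of_pos_of_lt_pi (by linarith) (by linarith)
  rw [hpolar, Complex.arg_mul_cos_add_sin_mul_I (by positivity)]
  constructor <;> linarith

lemma arg_one_sub_circleExp_of_neg {t : ℝ} (ht0 : t < 0) (ht : -(2 * Real.pi) < t) :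
    Complex.arg (1 - Circle.exp t) = (t + Real.pi) / 2 := by
  rw [← Circle.periodic_exp t, arg_one_sub_circleExp_of_pos (by linarith) (by linarith)]
  ring

theorem exists_path_eq_path_of_interlaced {α β γ δ : ℝ} (hαβ : α < β) (hβγ : β < γ) (hγδ : γ < δ)
    (hδα : δ < α + 2 * Real.pi) (P : Path (Circle.exp α : ℂ) (Circle.exp γ))
    (Q : Path (Circle.exp β : ℂ) (Circle.exp δ)) (hP : ∀ s, ‖P s‖ ≤ 1) (hQ : ∀ t, ‖Q t‖ ≤ 1) :
    ∃ s t, P s = Q t := by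
  by_contra! hPQ
  have hne (s t : ℝ) : P.extend s ≠ Q.extend t := hPQ _ _
  obtain ⟨L, hL, hexp⟩ := exists_continuous_exp_eq (X := ℝ × ℝ)
    (f := fun q ↦ P.extend q.1 - Q.extend q.2) (by fun_prop) (fun q ↦ sub_ne_zero.2 (hne _ _))
  have bottom := im_sub_im_eq_arg_sub_arg (L := fun s ↦ L (s, 0)) (k := 1) (by fun_prop)
    P.continuous_extend (fun s ↦ hP _) (fun s ↦ Q.extend_zero ▸ hne s 0)
    (fun s ↦ by rw [hexp, Q.extend_zero, one_mul]) P.extend_one P.extend_zero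
  have top := im_sub_im_eq_arg_sub_arg (L := fun s ↦ L (s, 1)) (k := 1) (by fun_prop)
    P.continuous_extend (fun s ↦ hP _) (fun s ↦ Q.extend_one ▸ hne s 1)
    (fun s ↦ by rw [hexp, Q.extend_one, one_mul]) P.extend_one P.extend_zero
  have left := im_sub_im_eq_arg_sub_arg (L := fun t ↦ L (0, t)) (k := -1) (by fun_prop)
    Q.continuous_extend (fun t ↦ hQ _) (fun t ↦ P.extend_zero ▸ (hne 0 t).symm)
    (fun t ↦ by rw [hexp, P.extend_zero, neg_one_mul, neg_sub]) Q.extend_one Q.extend_zero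
  have right := im_sub_im_eq_arg_sub_arg (L := fun t ↦ L (1, t)) (k := -1) (by fun_prop)
    Q.continuous_extend (fun t ↦ hQ _) (fun t ↦ P.extend_one ▸ (hne 1 t).symm)
    (fun t ↦ by rw [hexp, P.extend_one, neg_one_mul, neg_sub]) Q.extend_one Q.extend_zero
  rw [arg_one_sub_circleExp_of_pos (by linarith) (by linarith),
    arg_one_sub_circleExp_of_neg (by linarith) (by linarith)] at bottom right
  rw [arg_one_sub_circleExp_of_neg (by linarith) (by linarith),
    arg_one_sub_circleExp_of_neg (by linarith) (by linarith)] at top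
  rw [arg_one_sub_circleExp_of_pos (by linarith) (by linarith),
    arg_one_sub_circleExp_of_pos (by linarith) (by linarith)] at left
  linarith [Real.pi_pos]

end CrossingCurves

/-- The vertex order `θ` is noncrossing for `G` if no two edges of `G` have interlaced endpoints.
This is what remains of an outerplanar embedding when the circle is cut open at a point. -/
def IsNonCrossing {α : Type*} [LT α] (G : SimpleGraph V) (θ : V → α) : Prop :=
  ∀ ⦃a b c d⦄, θ a < θ b → θ b < θ c → θ c < θ d → G.Adj a c → ¬ G.Adj b d

/-- A drawing of `G` in the closed unit disk of the complex plane, with the vertex `v` at the point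
`z v` of the unit circle and the edge `e` inside the set `arc e`. Disjointness is only required of
the arcs of edges without a common vertex. -/
structure IsDiskDrawing (G : SimpleGraph V) (z : V → Circle) (arc : Sym2 V → Set ℂ) : Prop where
  injective : Function.Injective z
  norm_le_one : ∀ e ∈ G.edgeSet, ∀ w ∈ arc e, ‖w‖ ≤ 1
  joinedIn : ∀ u v, G.Adj u v → JoinedIn (arc s(u, v)) (z u : ℂ) (z v)
  disjoint : ∀ e ∈ G.edgeSet, ∀ f ∈ G.edgeSet, (∀ v ∈ e, v ∉ f) → Disjoint (arc e) (arc f)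

section Drawing

variable {G : SimpleGraph V}

lemma exists_circleExp_eq_mem_Ioc (z : V → Circle) (x : V) :
    ∃ θ : V → ℝ, ∀ v, Circle.exp (θ v) = z v ∧ θ v ∈ Set.Ioc (θ x - 2 * Real.pi) (θ x) := by
  set a := Complex.arg (z x)
  have hlift (v) : ∃ t ∈ Set.Ioc (a - 2 * Real.pi) a, Circle.exp t = z v ∧ (v = x → t = a) := by
    obtain rfl | hv := eq_or_ne v x
    · exact ⟨a, ⟨by linarith [Real.pi_pos], le_rfl⟩, Circle.exp_arg _, fun _ ↦ rfl⟩
    · obtain ⟨t, ht, hexp⟩ := Circle.periodic_exp.exists_mem_Ioc Real.two_pi_pos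
        (Complex.arg (z v)) (a - 2 * Real.pi)
      exact ⟨t, by simpa using ht, hexp ▸ Circle.exp_arg _, fun h ↦ (hv h).elim⟩
  choose θ hmem hexp hx using hlift
  exact ⟨θ, fun v ↦ ⟨hexp v, hx x rfl ▸ hmem v⟩⟩

namespace IsDiskDrawing

lemma exists_isNonCrossing {z : V → Circle} {arc : Sym2 V → Set ℂ} (h : IsDiskDrawing G z arc)
    (x : V) :
    ∃ θ : V → ℝ, Function.Injective θ ∧ IsNonCrossing G θ ∧ ∀ v, θ v ≤ θ x := by
  obtain ⟨θ, hθ⟩ := exists_circleExp_eq_mem_Ioc z x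
  have hexp v := (hθ v).1
  have hIoc v := (hθ v).2
  refine ⟨θ, fun v w hvw ↦ h.injective (by rw [← hexp, hvw, hexp]), ?_, fun v ↦ (hIoc v).2⟩
  intro a b c d hab hbc hcd hac hbd
  obtain ⟨P, hP⟩ := h.joinedIn a c hac
  obtain ⟨Q, hQ⟩ := h.joinedIn b d hbd
  obtain ⟨s, t, hst⟩ := exists_path_eq_path_of_interlaced hab hbc hcd
    (by linarith [(hIoc a).1, (hIoc d).2]) (P.cast (by rw [hexp]) (by rw [hexp]))
    (Q.cast (by rw [hexp]) (by rw [hexp])) (fun s ↦ h.norm_le_one _ hac _ (hP s))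
    (fun t ↦ h.norm_le_one _ hbd _ (hQ t))
  have hshare : ∀ v ∈ s(a, c), v ∉ s(b, d) := by
    simp only [Sym2.mem_iff]
    rintro v (rfl | rfl) (rfl | rfl) <;> order
  exact Set.disjoint_left.1 (h.disjoint _ hac _ hbd hshare) (hP s) (hst ▸ hQ t)

end IsDiskDrawing

namespace IsOuterplanar

lemma exists_isDiskDrawing (h : IsOuterplanar G) : ∃ z arc, IsDiskDrawing G z arc := by
  obtain ⟨p, c, hp, hp1, hcont, hends, hin, -, hdisj⟩ := h
  let ψ : EuclideanSpace ℝ (Fin 2) ≃ₗᵢ[ℝ] ℂ := Complex.orthonormalBasisOneI.repr.symm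
  have harc : ∀ e ∈ G.edgeSet, ∀ t ∈ I, (∃ v ∈ e, c e t = p v) ∨ t ∈ Set.Ioo 0 1 := by
    intro e he t ht
    induction e with | _ u v
    rcases ht.1.eq_or_lt with rfl | ht0
    · rcases hends u v he with h | h <;> simp [h.1]
    rcases ht.2.eq_or_lt with rfl | ht1
    · rcases hends u v he with h | h <;> simp [h.2]
    exact .inr ⟨ht0, ht1⟩
  have hnotin : ∀ e ∈ G.edgeSet, ∀ t ∈ Set.Ioo (0 : ℝ) 1, ∀ v, c e t ≠ p v := fun e he t ht v heq ↦
    (heq ▸ hin e he t ht).ne (hp1 v)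
  refine ⟨fun v ↦ ⟨ψ (p v), by simp [Submonoid.unitSphere, hp1]⟩, fun e ↦ ψ ∘ c e '' I,
    ?_, ?_, ?_, ?_⟩
  · exact fun v w hvw ↦ hp (ψ.injective (congr_arg Subtype.val hvw))
  · rintro e he _ ⟨t, ht, rfl⟩
    rw [Function.comp_apply, ψ.norm_map]
    obtain ⟨v, -, hv⟩ | ht := harc e he t ht
    · rw [hv, hp1]
    · exact (hin e he t ht).le
  · intro u v huv
    have hline := JoinedIn.ofLine (ψ.continuous.comp_continuousOn (hcont s(u, v) huv).1) rfl rfl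
      subset_rfl
    rcases hends u v huv with ⟨h0, h1⟩ | ⟨h0, h1⟩
    · simpa only [Function.comp_apply, h0, h1] using hline
    · simpa only [Function.comp_apply, h0, h1] using hline.symm
  · intro e he f hf hef
    rw [Set.disjoint_left]
    rintro _ ⟨s, hs, rfl⟩ ⟨t, ht, hst⟩
    replace hst : c f t = c e s := ψ.injective hst
    obtain ⟨u, hu, hsu⟩ | hs := harc e he s hs <;> obtain ⟨v, hv, htv⟩ | ht := harc f hf t ht
    · exact hef u hu (hp (hsu.symm.trans (hst.symm.trans htv)) ▸ hv)
    · exact hnotin f hf t ht u (hst.trans hsu)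
    · exact hnotin e he s hs v (hst.symm.trans htv)
    · refine hdisj e he f hf ?_ s hs t ht hst.symm
      rintro rfl
      exact hef _ e.out_fst_mem e.out_fst_mem

theorem exists_isNonCrossing (h : IsOuterplanar G) (x : V) :
    ∃ θ : V → ℝ, Function.Injective θ ∧ IsNonCrossing G θ ∧ ∀ v, θ v ≤ θ x :=
  have ⟨_, _, hdrawing⟩ := h.exists_isDiskDrawing
  hdrawing.exists_isNonCrossing x

end IsOuterplanar

end Drawing

section ChordlessCycles

variable {G : SimpleGraph V}

lemma eq_or_eq_of_isCycle_append {x y z : V} {p : G.Walk x y} {q : G.Walk y x}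
    (h : (p.append q).IsCycle) (hp : z ∈ p.support) (hq : z ∈ q.support) : z = x ∨ z = y := by
  by_contra! hz
  have hnodup := h.support_nodup
  rw [Walk.tail_support_append] at hnodup
  exact List.disjoint_of_nodup_append hnodup ((Walk.mem_support_iff p).1 hp |>.resolve_left hz.1)
    ((Walk.mem_support_iff q).1 hq |>.resolve_left hz.2)

lemma exists_mem_support_of_boundary_subset {S T : Set V}
    (hST : ∀ a ∈ S, ∀ b ∉ S, G.Adj a b → b ∈ T) {x y : V} (p : G.Walk x y) (hx : x ∈ S)
    (hy : y ∉ S) : ∃ b ∈ p.support, b ∉ S ∧ b ∈ T := by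
  obtain ⟨d, hd, hfst, hsnd⟩ := p.exists_boundary_dart S hx hy
  exact ⟨d.snd, p.dart_snd_mem_support_of_mem_darts hd, hsnd, hST _ hfst _ hsnd d.adj⟩

namespace IsChordlessCycle

variable {α : Type*} [LinearOrder α] {θ : V → α} {r r' : V} {c : G.Walk r r} {c' : G.Walk r' r'}

lemma rotate [DecidableEq V] (hc : IsChordlessCycle c) {x : V} (hx : x ∈ c.support) :
    IsChordlessCycle (c.rotate x hx) := by
  refine ⟨hc.1.rotate hx, fun a b ha hb hab ↦ ?_⟩
  rw [Walk.mem_support_rotate_iff] at ha hb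
  exact (c.rotate_edges x hx).mem_iff.2 (hc.2 a b ha hb hab)

lemma exists_isChordlessCycle_append (hc : IsChordlessCycle c) {x y : V} (hx : x ∈ c.support)
    (hy : y ∈ c.support) :
    ∃ (p : G.Walk x y) (q : G.Walk y x), IsChordlessCycle (p.append q) := by
  classical
  have hy' : y ∈ (c.rotate x hx).support := (c.mem_support_rotate_iff x hx).2 hy
  exact ⟨_, _, ((c.rotate x hx).take_spec hy').symm ▸ hc.rotate hx⟩

lemma edges_subset_of_support_subset (hc : IsChordlessCycle c) {x y : V} {p : G.Walk x y}
    (h : p.support ⊆ c.support) : p.edges ⊆ c.edges := by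
  intro e he
  induction e with | _ a b
  exact hc.2 a b (h (p.fst_mem_support_of_mem_edges he)) (h (p.snd_mem_support_of_mem_edges he))
    (p.adj_of_mem_edges he)

theorem mem_or_eq_or_eq_of_boundary_subset (hc : IsChordlessCycle c) {u v : V} (huv : G.Adj u v)
    {S : Set V} (hS : ∀ a ∈ S, ∀ b ∉ S, G.Adj a b → b = u ∨ b = v) {x y : V} (hx : x ∈ c.support)
    (hxS : x ∈ S) (hy : y ∈ c.support) : y ∈ S ∨ y = u ∨ y = v := by
  by_contra! hy'
  obtain ⟨hyS, hyu, hyv⟩ := hy'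
  obtain ⟨p, q, hpq⟩ := hc.exists_isChordlessCycle_append hx hy
  -- Each of the two arcs of the cycle between `x` and `y` leaves `S` through its own endpoint of
  -- `uv`, so `uv` is a chord of the cycle.
  obtain ⟨s, hsp, hsS, hs⟩ := exists_mem_support_of_boundary_subset (T := {u, v}) hS p hxS hyS
  obtain ⟨t, htq, htS, ht⟩ := exists_mem_support_of_boundary_subset (T := {u, v}) hS q.reverse hxS
    hyS
  rw [Walk.support_reverse, List.mem_reverse] at htq
  have hcommon {b} (hbS : b ∉ S) (hb : b = u ∨ b = v) (hbp : b ∈ p.support) : b ∉ q.support := by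
    intro hbq
    rcases eq_or_eq_of_isCycle_append hpq.1 hbp hbq with rfl | rfl
    · exact hbS hxS
    · exact hb.elim hyu hyv
  have hst : G.Adj s t := by
    have hne : s ≠ t := fun h ↦ hcommon hsS hs hsp (h ▸ htq)
    rcases hs with rfl | rfl <;> rcases ht with rfl | rfl
    exacts [(hne rfl).elim, huv, huv.symm, (hne rfl).elim]
  have hedge := hpq.2 s t (p.support_subset_support_append_left q hsp)
    (p.support_subset_support_append_right q htq) hst
  rw [Walk.edges_append, List.mem_append] at hedge
  rcases hedge with hedge | hedge
  · exact hcommon htS ht (p.snd_mem_support_of_mem_edges hedge) htq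
  · exact hcommon hsS hs hsp (q.fst_mem_support_of_mem_edges hedge)

theorem mem_Icc_of_mem_Ioo (hc : IsChordlessCycle c) (hθ : Function.Injective θ)
    (hG : IsNonCrossing G θ) {u v : V} (huv : G.Adj u v) {x y : V} (hx : x ∈ c.support)
    (hxuv : θ x ∈ Set.Ioo (θ u) (θ v)) (hy : y ∈ c.support) : θ y ∈ Set.Icc (θ u) (θ v) := by
  have hboundary : ∀ a ∈ θ ⁻¹' Set.Ioo (θ u) (θ v), ∀ b ∉ θ ⁻¹' Set.Ioo (θ u) (θ v),
      G.Adj a b → b = u ∨ b = v := by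
    rintro a ⟨hua, hav⟩ b hb hab
    by_contra! hne
    rcases (hθ.ne hne.1).lt_or_gt with hbu | hub
    · exact hG hbu hua hav hab.symm huv
    rcases (hθ.ne hne.2).lt_or_gt with hbv | hvb
    · exact hb ⟨hub, hbv⟩
    · exact hG hua hav hvb huv hab
  have huv_le : θ u ≤ θ v := (hxuv.1.trans hxuv.2).le
  rcases hc.mem_or_eq_or_eq_of_boundary_subset huv hboundary hx hxuv hy with hy | rfl | rfl
  · exact Set.Ioo_subset_Icc_self hy
  · exact Set.left_mem_Icc.2 huv_le
  · exact Set.right_mem_Icc.2 huv_le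

lemma exists_adj_forall_mem_Icc (hc : IsChordlessCycle c) (hθ : Function.Injective θ)
    (hG : IsNonCrossing G θ) :
    ∃ u, ∃ v ∈ c.support, G.Adj u v ∧ ∀ z ∈ c.support, θ z ∈ Set.Icc (θ u) (θ v) := by
  obtain ⟨v, hv, hmax⟩ := c.support.finite_toSet.exists_maximalFor θ _ ⟨r, c.start_mem_support⟩
  replace hmax (z) (hz : z ∈ c.support) : θ z ≤ θ v := not_lt.1 fun h ↦ h.not_ge (hmax hz h.le)
  obtain ⟨a, b, hab, hN⟩ := Set.ncard_eq_two.1 (hc.1.ncard_neighborSet_toSubgraph_eq_two hv)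
  have hnbr {w} (hw : w = a ∨ w = b) : w ∈ c.support ∧ G.Adj w v := by
    have hadj : c.toSubgraph.Adj v w := by
      rw [← Subgraph.mem_neighborSet, hN]
      exact hw
    exact ⟨c.mem_verts_toSubgraph.1 hadj.snd_mem, hadj.adj_sub.symm⟩
  -- The edge from the lower neighbour `u` to `v` spans the other neighbour `w`, hence all of `c`.
  obtain ⟨u, w, huv, ⟨hw, hwv⟩, huw⟩ :
      ∃ u w, G.Adj u v ∧ (w ∈ c.support ∧ G.Adj w v) ∧ θ u < θ w := by
    rcases (hθ.ne hab).lt_or_gt with h | h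
    · exact ⟨a, b, (hnbr (.inl rfl)).2, hnbr (.inr rfl), h⟩
    · exact ⟨b, a, (hnbr (.inr rfl)).2, hnbr (.inl rfl), h⟩
  have hwlt : θ w < θ v := (hmax w hw).lt_of_ne (hθ.ne hwv.ne)
  exact ⟨u, v, hv, huv, fun z hz ↦ hc.mem_Icc_of_mem_Ioo hθ hG huv hw ⟨huw, hwlt⟩ hz⟩

theorem subsingleton_common_edges (hc : IsChordlessCycle c) (hc' : IsChordlessCycle c')
    (houter : IsOuterplanar G) {x : V} (hx' : x ∈ c'.support) (hx : x ∉ c.support) :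
    {e | e ∈ c.edges ∧ e ∈ c'.edges}.Subsingleton := by
  obtain ⟨θ, hθ, hG, hmax⟩ := houter.exists_isNonCrossing x
  obtain ⟨u, v, hv, huv, hIcc⟩ := hc.exists_adj_forall_mem_Icc hθ hG
  have hvx : θ v < θ x := (hmax v).lt_of_ne (hθ.ne (ne_of_mem_of_not_mem hv hx))
  have hvertex {z} (hz : z ∈ c.support) (hz' : z ∈ c'.support) : z = u ∨ z = v := by
    by_contra! hne
    have hIoo : θ z ∈ Set.Ioo (θ u) (θ v) :=
      ⟨(hIcc z hz).1.lt_of_ne (hθ.ne hne.1.symm), (hIcc z hz).2.lt_of_ne (hθ.ne hne.2)⟩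
    exact hvx.not_ge (hc'.mem_Icc_of_mem_Ioo hθ hG huv hz' hIoo hx').2
  have hedge : ∀ e ∈ {e | e ∈ c.edges ∧ e ∈ c'.edges}, e = s(u, v) := by
    rintro e ⟨he, he'⟩
    induction e with | _ a b
    have ha := hvertex (c.fst_mem_support_of_mem_edges he) (c'.fst_mem_support_of_mem_edges he')
    have hb := hvertex (c.snd_mem_support_of_mem_edges he) (c'.snd_mem_support_of_mem_edges he')
    have hab := (c.adj_of_mem_edges he).ne
    grind
  exact fun e he f hf ↦ (hedge e he).trans (hedge f hf).symm

end IsChordlessCycle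

end ChordlessCycles

theorem bipartite_outerplanar_is_ci_general {G : SimpleGraph V} (houter : IsOuterplanar G) :
    ChordlessCyclesShareAtMostOneEdge G := by
  rintro _ ⟨r, c, hc, rfl⟩ _ ⟨r', c', hc', rfl⟩ hne
  suffices hsub : {e | e ∈ c.edges ∧ e ∈ c'.edges}.Subsingleton from
    (Set.ncard_le_one hsub.finite).2 hsub
  by_cases hcc' : c.support ⊆ c'.support
  · have hc'c : ¬ c'.support ⊆ c.support := fun h ↦ hne <| Set.Subset.antisymm
      (hc'.edges_subset_of_support_subset hcc') (hc.edges_subset_of_support_subset h)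
    obtain ⟨x, hx', hx⟩ := Set.not_subset.1 hc'c
    exact hc.subsingleton_common_edges hc' houter hx' hx
  · obtain ⟨x, hx, hx'⟩ := Set.not_subset.1 hcc'
    simpa only [and_comm] using hc'.subsingleton_common_edges hc houter hx hx'

/-- Every bipartite outerplanar graph is a CI graph: any two of its chordless cycles
share at most one edge. -/
theorem bipartite_outerplanar_is_ci [Fintype V] {G : SimpleGraph V}
    (hbip : G.Colorable 2) (houter : IsOuterplanar G) :
    ChordlessCyclesShareAtMostOneEdge G :=
  bipartite_outerplanar_is_ci_general houter
end
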